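/- arXiv:2106.02755 — 13 statements merged into one kernel-verified Lean document; each statement's English description precedes it below -/
import Mathlib

section
/- Let ρ > 1 and let E_ρ be the open region in ℂ bounded by the image of the circle {z ∈ ℂ : |z| = ρ} under the map z ↦ z + z⁻¹ + 2 (the Bernstein ellipse of parameter ρ around the interval [0,4]). Suppose f : ℂ → ℂ is analytic on E_ρ, bounded on E_ρ with M = sup_{z ∈ E_ρ} |f(z)| < ∞, and real-valued on [0,4]. Then for every n ∈ ℕ there exists a real polynomial p of degree at most n such that |f(t) − p(t)| ≤ (2M/(ρ−1))·ρ^{−n} for all t ∈ [0,4]. -/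
/-- The (open) Bernstein ellipse of parameter `ρ > 1` around the interval `[0,4]`:
the open region in `ℂ` bounded by the image of the circle `{|z| = ρ}` under
`z ↦ z + z⁻¹ + 2`.  It is realized as the image of the annulus `1 ≤ |z| < ρ`
under this map (the unit circle maps onto `[0,4]`). -/
noncomputable def bernsteinEllipse (ρ : ℝ) : Set ℂ :=
  (fun z : ℂ => z + z⁻¹ + 2) '' {z : ℂ | 1 ≤ ‖z‖ ∧ ‖z‖ < ρ}

open Metric in
lemma bern_annulus (ρ : ℝ) (hρ : 1 < ρ) (F : ℂ → ℂ)
    (hF : DifferentiableOn ℂ F {z : ℂ | ρ⁻¹ < ‖z‖ ∧ ‖z‖ < ρ}) (k : ℤ) (r R : ℝ)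
    (hr : ρ⁻¹ < r) (hrR : r ≤ R) (hR : R < ρ) :
    (∮ z in C(0, R), z ^ (-k - 1) * F z) = ∮ z in C(0, r), z ^ (-k - 1) * F z := by
  have hρ0 : 0 < ρ⁻¹ := by positivity
  have hopen : IsOpen {z : ℂ | ρ⁻¹ < ‖z‖ ∧ ‖z‖ < ρ} :=
    (isOpen_lt continuous_const continuous_norm).inter (isOpen_lt continuous_norm continuous_const)
  have hd : DifferentiableOn ℂ (fun z => z ^ (-k - 1) * F z) {z : ℂ | ρ⁻¹ < ‖z‖ ∧ ‖z‖ < ρ} := by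
    refine DifferentiableOn.mul ?_ hF
    intro z hz
    have : z ≠ 0 := by
      rw [← norm_pos_iff]; exact hρ0.trans hz.1
    exact (differentiableAt_zpow.2 (Or.inl this)).differentiableWithinAt
  refine Complex.circleIntegral_eq_of_differentiable_on_annulus_off_countable (hρ0.trans hr) hrR
    (s := ∅) (by simp) ?_ ?_
  · refine hd.continuousOn.mono ?_
    intro z hz
    simp only [Set.mem_sdiff, mem_closedBall, dist_zero_right, mem_ball, not_lt] at hz
    exact ⟨hr.trans_le hz.2, hz.1.trans_lt hR⟩
  · intro z hz
    simp only [Set.mem_sdiff, mem_closedBall, dist_zero_right, mem_ball, not_le] at hz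
    exact hd.differentiableAt (hopen.mem_nhds ⟨hr.trans hz.1.2, hz.1.1.trans hR⟩)

instance bern_fact : Fact (0 < 2 * Real.pi) := ⟨Real.two_pi_pos⟩

lemma bern_coeff (F : ℂ → ℂ) (k : ℤ) :
    fourierCoeff (T := 2 * Real.pi) (fun x => F (AddCircle.toCircle x : ℂ)) k =
      (2 * (Real.pi : ℂ) * Complex.I)⁻¹ • ∮ z in C(0, 1), z ^ (-k - 1) * F z := by
  rw [fourierCoeff_eq_intervalIntegral _ _ 0, circleIntegral]
  have hpi : (Real.pi : ℂ) ≠ 0 := by exact_mod_cast Real.pi_ne_zero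
  have : ∀ θ : ℝ, deriv (circleMap 0 1) θ • (circleMap 0 1 θ ^ (-k - 1) * F (circleMap 0 1 θ)) =
     Complex.I * (fourier (T := 2 * Real.pi) (-k) (θ : AddCircle (2 * Real.pi)) •
      F (AddCircle.toCircle (θ : AddCircle (2 * Real.pi)) : ℂ)) := by
    intro θ
    have h1 : circleMap 0 1 θ = Complex.exp (θ * Complex.I) := by simp [circleMap]
    have h2 : (AddCircle.toCircle (θ : AddCircle (2 * Real.pi)) : ℂ)
        = Complex.exp (θ * Complex.I) := by
      rw [AddCircle.toCircle_apply_mk, Circle.coe_exp]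
      rw [div_self Real.two_pi_pos.ne', one_mul]
    have h3 : fourier (T := 2 * Real.pi) (-k) (θ : AddCircle (2 * Real.pi))
        = Complex.exp (θ * Complex.I) ^ (-k) := by
      rw [fourier_coe_apply, ← Complex.exp_int_mul]
      congr 1
      push_cast
      field_simp
    rw [deriv_circleMap, h1, h2, h3, smul_eq_mul, smul_eq_mul,
      zpow_sub₀ (Complex.exp_ne_zero _), zpow_one]
    field_simp [Complex.exp_ne_zero]
  simp_rw [this]
  rw [intervalIntegral.integral_const_mul, zero_add]
  rw [Complex.real_smul, smul_eq_mul]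
  push_cast
  field_simp [Complex.I_ne_zero]

open Metric in
lemma bern_bound (ρ : ℝ) (hρ : 1 < ρ) (F : ℂ → ℂ) (M : ℝ)
    (hF : DifferentiableOn ℂ F {z : ℂ | ρ⁻¹ < ‖z‖ ∧ ‖z‖ < ρ})
    (hM : ∀ z : ℂ, ρ⁻¹ < ‖z‖ → ‖z‖ < ρ → ‖F z‖ ≤ M) (k : ℤ) (r : ℝ)
    (h1 : ρ⁻¹ < r) (h2 : r < ρ) :
    ‖fourierCoeff (T := 2 * Real.pi) (fun x => F (AddCircle.toCircle x : ℂ)) k‖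
      ≤ M * r ^ (-k) := by
  have hρ0 : 0 < ρ⁻¹ := by positivity
  have hρ1 : ρ⁻¹ < 1 := inv_lt_one_of_one_lt₀ hρ
  have hr : 0 < r := hρ0.trans h1
  have e : (∮ z in C(0, 1), z ^ (-k - 1) * F z) = ∮ z in C(0, r), z ^ (-k - 1) * F z := by
    rcases le_total r 1 with h | h
    · exact bern_annulus ρ hρ F hF k r 1 h1 h hρ
    · exact (bern_annulus ρ hρ F hF k 1 r hρ1 h h2).symm
  rw [bern_coeff, e]
  refine (circleIntegral.norm_two_pi_i_inv_smul_integral_le_of_norm_le_const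
    (C := r ^ (-k - 1) * M) hr.le ?_).trans ?_
  · intro z hz
    have hz : ‖z‖ = r := by simpa using hz
    rw [norm_mul, norm_zpow, hz]
    gcongr
    exact hM z (hz ▸ h1) (hz ▸ h2)
  · rw [zpow_sub₀ hr.ne', zpow_one]
    apply le_of_eq
    field_simp

lemma bern_bound_lim (ρ : ℝ) (hρ : 1 < ρ) (F : ℂ → ℂ) (M : ℝ)
    (hF : DifferentiableOn ℂ F {z : ℂ | ρ⁻¹ < ‖z‖ ∧ ‖z‖ < ρ})
    (hM : ∀ z : ℂ, ρ⁻¹ < ‖z‖ → ‖z‖ < ρ → ‖F z‖ ≤ M) (k : ℕ) :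
    ‖fourierCoeff (T := 2 * Real.pi) (fun x => F (AddCircle.toCircle x : ℂ)) k‖ ≤ M * ρ⁻¹ ^ k ∧
    ‖fourierCoeff (T := 2 * Real.pi) (fun x => F (AddCircle.toCircle x : ℂ)) (-k)‖
      ≤ M * ρ⁻¹ ^ k := by
  have hρ1 : ρ⁻¹ < 1 := inv_lt_one_of_one_lt₀ hρ
  have hρ0 : ρ ≠ 0 := by positivity
  have ht : Filter.Tendsto (fun s : ℝ => M * s⁻¹ ^ k) (nhdsWithin ρ (Set.Iio ρ))
      (nhds (M * ρ⁻¹ ^ k)) := by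
    refine Filter.Tendsto.mono_left ?_ nhdsWithin_le_nhds
    exact ((tendsto_inv₀ hρ0).pow k).const_mul M
  have hev : ∀ᶠ s in nhdsWithin ρ (Set.Iio ρ), s ∈ Set.Ioo 1 ρ := Ioo_mem_nhdsLT hρ
  constructor
  · refine ge_of_tendsto ht ?_
    filter_upwards [hev] with s hs
    have := bern_bound ρ hρ F M hF hM k s (hρ1.trans hs.1) hs.2
    simpa using this
  · refine ge_of_tendsto ht ?_
    filter_upwards [hev] with s hs
    have h0 : 0 < s := by linarith [hs.1]
    have := bern_bound ρ hρ F M hF hM (-k) s⁻¹ (by gcongr; exact hs.2)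
      ((inv_lt_one_of_one_lt₀ hs.1).trans hρ)
    simpa using this

theorem stmt_0 (ρ : ℝ) (hρ : 1 < ρ) (f : ℂ → ℂ) (M : ℝ)
    (hf : DifferentiableOn ℂ f (bernsteinEllipse ρ))
    (hM : ∀ z ∈ bernsteinEllipse ρ, ‖f z‖ ≤ M)
    (hreal : ∀ t ∈ Set.Icc (0 : ℝ) 4, (f (t : ℂ)).im = 0) :
    ∀ n : ℕ, ∃ p : Polynomial ℝ, p.natDegree ≤ n ∧
      ∀ t ∈ Set.Icc (0 : ℝ) 4,
        ‖f (t : ℂ) - ((p.eval t : ℝ) : ℂ)‖ ≤ 2 * M / (ρ - 1) * (ρ ^ n)⁻¹ := by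
  intro n
  have hρ0 : 0 < ρ⁻¹ := by positivity
  have hρ1 : ρ⁻¹ < 1 := inv_lt_one_of_one_lt₀ hρ
  have hmap : ∀ z : ℂ, ρ⁻¹ < ‖z‖ → ‖z‖ < ρ → z + z⁻¹ + 2 ∈ bernsteinEllipse ρ := by
    intro z h1 h2
    rcases le_total 1 ‖z‖ with h | h
    · exact ⟨z, ⟨h, h2⟩, rfl⟩
    · have hz : 0 < ‖z‖ := hρ0.trans h1
      refine ⟨z⁻¹, ⟨?_, ?_⟩, ?_⟩
      · rw [norm_inv]; exact (one_le_inv₀ hz).2 h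
      · rw [norm_inv]; exact inv_lt_of_inv_lt₀ (by linarith) h1
      · simp only [inv_inv]; ring
  set F : ℂ → ℂ := fun z => f (z + z⁻¹ + 2) with hFdef
  have hF : DifferentiableOn ℂ F {z : ℂ | ρ⁻¹ < ‖z‖ ∧ ‖z‖ < ρ} := by
    refine hf.comp ?_ (fun z hz => hmap z hz.1 hz.2)
    intro z hz
    have : z ≠ 0 := by
      rw [← norm_pos_iff]; exact hρ0.trans hz.1
    exact ((differentiableAt_id.add (differentiableAt_inv this)).add_const _).differentiableWithinAt
  have hFM : ∀ z : ℂ, ρ⁻¹ < ‖z‖ → ‖z‖ < ρ → ‖F z‖ ≤ M := fun z h1 h2 => hM _ (hmap z h1 h2)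
  let g : C(AddCircle (2 * Real.pi), ℂ) := ⟨fun x => F (AddCircle.toCircle x : ℂ), by
    refine hF.continuousOn.comp_continuous
      (continuous_subtype_val.comp AddCircle.continuous_toCircle) ?_
    intro x
    have hx : ‖(AddCircle.toCircle x : ℂ)‖ = 1 := Circle.norm_coe _
    exact ⟨hx.symm ▸ hρ1, hx.symm ▸ hρ⟩⟩
  obtain ⟨a, ha⟩ : ∃ a : ℤ → ℂ, a = fourierCoeff (T := 2 * Real.pi) g := ⟨_, rfl⟩
  have hb : ∀ k : ℕ, ‖a k‖ ≤ M * ρ⁻¹ ^ k ∧ ‖a (-k)‖ ≤ M * ρ⁻¹ ^ k := by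
    intro k; rw [ha]; exact bern_bound_lim ρ hρ F M hF hFM k
  have hgeo : Summable (fun k : ℕ => M * ρ⁻¹ ^ k) :=
    (summable_geometric_of_lt_one hρ0.le hρ1).mul_left M
  have hsum : Summable a := Summable.of_nat_of_neg
    (Summable.of_norm_bounded hgeo fun k => (hb k).1)
    (Summable.of_norm_bounded hgeo fun k => (hb k).2)
  have hser : ∀ θ : ℝ, HasSum (fun k : ℕ => (a k + a (-k)) * (Real.cos (k * θ) : ℂ))
      (f ((2 + 2 * Real.cos θ : ℝ) : ℂ) + a 0) := by
    intro θ
    have hfour : ∀ (k : ℤ) (x : ℝ), fourier (T := 2 * Real.pi) k (x : AddCircle (2 * Real.pi))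
        = Complex.exp ((k * x : ℂ) * Complex.I) := by
      intro k x
      have hpi : (Real.pi : ℂ) ≠ 0 := by exact_mod_cast Real.pi_ne_zero
      rw [fourier_coe_apply]
      congr 1
      push_cast
      field_simp
    have hg : ∀ x : ℝ, g (x : AddCircle (2 * Real.pi)) = f ((2 + 2 * Real.cos x : ℝ) : ℂ) := by
      intro x
      change f _ = _
      rw [AddCircle.toCircle_apply_mk, Circle.coe_exp, div_self Real.two_pi_pos.ne', one_mul,
        ← Complex.exp_neg]
      congr 1
      push_cast
      rw [Complex.two_cos]
      ring_nf
    have hs := has_pointwise_sum_fourier_series_of_summable (f := g) (ha ▸ hsum)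
    rw [← ha] at hs
    have h1 := hs (θ : AddCircle (2 * Real.pi))
    have h2 := hs ((-θ : ℝ) : AddCircle (2 * Real.pi))
    rw [hg] at h1 h2
    rw [Real.cos_neg] at h2
    have h3 := ((h1.add h2).mul_left (1 / 2 : ℂ))
    have h4 : HasSum (fun k : ℤ => a k * (Real.cos (k * θ) : ℂ))
        (f ((2 + 2 * Real.cos θ : ℝ) : ℂ)) := by
      have e1 : (fun k : ℤ => a k * (Real.cos (k * θ) : ℂ)) = fun i : ℤ => (1 / 2 : ℂ) *
          (a i • fourier (T := 2 * Real.pi) i (θ : AddCircle (2 * Real.pi)) +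
            a i • fourier (T := 2 * Real.pi) i ((-θ : ℝ) : AddCircle (2 * Real.pi))) := by
        funext k
        rw [hfour, hfour, smul_eq_mul, smul_eq_mul]
        push_cast
        rw [Complex.cos]
        ring_nf
      rw [e1]
      have e2 : ∀ w : ℂ, (1 / 2 : ℂ) * (w + w) = w := fun w => by ring
      rw [← e2 (f _)]
      exact h3
    have h5 := h4.nat_add_neg
    convert h5 using 1
    · ext k
      push_cast
      rw [neg_mul, Complex.cos_neg]
      ring
    · simp
  -- the polynomial
  let q : Polynomial ℝ := Polynomial.C (1 / 2) * Polynomial.X + Polynomial.C (-1)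
  refine ⟨∑ k ∈ Finset.range (n + 1), Polynomial.C (a (k : ℤ) + a (-(k : ℤ))).re *
    (Polynomial.Chebyshev.T ℝ k).comp q - Polynomial.C (a 0).re, ?_, ?_⟩
  · rw [Polynomial.natDegree_sub_C]
    refine Polynomial.natDegree_sum_le_of_forall_le _ _ ?_
    intro k hk
    refine (Polynomial.natDegree_C_mul_le _ _).trans ?_
    refine Polynomial.natDegree_comp_le.trans ?_
    have hq : q.natDegree ≤ 1 := Polynomial.natDegree_linear_le
    rw [Polynomial.Chebyshev.natDegree_T, Int.natAbs_natCast]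
    have := Finset.mem_range.1 hk
    nlinarith
  · intro t ht
    obtain ⟨θ, hθ⟩ : ∃ θ : ℝ, t = 2 + 2 * Real.cos θ := by
      refine ⟨Real.arccos ((t - 2) / 2), ?_⟩
      rw [Real.cos_arccos (by linarith [ht.1]) (by linarith [ht.2])]
      ring
    have hqe : q.eval t = Real.cos θ := by
      simp only [q, Polynomial.eval_add, Polynomial.eval_mul, Polynomial.eval_C, Polynomial.eval_X]
      rw [hθ]; ring
    have hs := (hser θ).tendsto_sum_nat
    rw [← hθ] at hs
    have hd := dist_le_of_le_geometric_of_tendsto ρ⁻¹ (2 * M) hρ1 (fun m => by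
      rw [Finset.sum_range_succ, dist_self_add_right, norm_mul]
      have hc : ‖(Real.cos (m * θ) : ℂ)‖ ≤ 1 := by
        rw [Complex.norm_real]; exact Real.abs_cos_le_one _
      calc _ ≤ ‖a m + a (-m)‖ * 1 := by gcongr
        _ ≤ ‖a m‖ + ‖a (-m)‖ := by rw [mul_one]; exact norm_add_le _ _
        _ ≤ _ := by linarith [(hb m).1, (hb m).2]) hs (n + 1)
    rw [dist_comm, dist_eq_norm] at hd
    set S := ∑ k ∈ Finset.range (n + 1), (a k + a (-k)) * (Real.cos (k * θ) : ℂ) with hS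
    have hkey : f (t : ℂ) - ((Polynomial.eval t (∑ k ∈ Finset.range (n + 1),
        Polynomial.C (a (k : ℤ) + a (-(k : ℤ))).re *
        (Polynomial.Chebyshev.T ℝ k).comp q - Polynomial.C (a 0).re) : ℝ) : ℂ)
        = (((f (t : ℂ) + a 0 - S).re : ℝ) : ℂ) := by
      apply Complex.ext
      · simp only [Complex.sub_re, Complex.add_re, Complex.ofReal_re, Polynomial.eval_sub,
          Polynomial.eval_finsetSum, Polynomial.eval_mul, Polynomial.eval_C, Polynomial.eval_comp,
          hqe, Polynomial.Chebyshev.T_real_cos, hS, Complex.re_sum, Complex.re_mul_ofReal,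
          Int.cast_natCast]
        ring
      · simp [hreal t ht]
    rw [hkey, Complex.norm_real]
    refine (Complex.abs_re_le_norm _).trans (hd.trans (le_of_eq ?_))
    have : ρ - 1 ≠ 0 := by linarith
    have h0 : ρ ≠ 0 := by positivity
    have h1 : 1 - ρ⁻¹ ≠ 0 := by linarith
    rw [inv_pow, pow_succ]
    field_simp
end

section
/- Let V ⊆ ℝ^d, let n ∈ ℕ, and let K be a polynomial kernel of degree at most n on ℝ^d. Let M = HF_V(n). Then there exist maps φ, ψ : V → ℝ^M such that K(x,y) = ⟨φ(x), ψ(y)⟩ for all x, y ∈ V. -/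
/-- The linear map sending a real polynomial in the variables `ι` to its restriction
(as a function) to a subset `V` of `ι → ℝ`. -/
noncomputable def restrictEval {ι : Type} (V : Set (ι → ℝ)) :
    MvPolynomial ι ℝ →ₗ[ℝ] (↥V → ℝ) where
  toFun p := fun x => MvPolynomial.eval (x : ι → ℝ) p
  map_add' p q := by funext x; simp
  map_smul' c p := by funext x; simp [MvPolynomial.smul_eval]

/-- The space of functions `V → ℝ` that are restrictions to `V` of polynomials of
total degree at most `n`. -/
noncomputable def polySpace {ι : Type} (V : Set (ι → ℝ)) (n : ℕ) :
    Submodule ℝ (↥V → ℝ) :=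
  (MvPolynomial.restrictTotalDegree ι ℝ n).map (restrictEval V)

/-- The Hilbert function of `V`: the dimension of the space of restrictions to `V`
of polynomials of total degree at most `n`. -/
noncomputable def HF {ι : Type} (V : Set (ι → ℝ)) (n : ℕ) : ℕ :=
  Module.finrank ℝ ↥(polySpace V n)

/-- Multi-indices in `d` variables of total degree at most `n`. -/
abbrev MIdx (d n : ℕ) := {a : Fin d → Fin (n + 1) // ∑ i, (a i : ℕ) ≤ n}

/-- The polynomial kernel `K(x,y) = Σ_{|α|≤n, |β|≤n} c_{αβ} x^α y^β` of degree at most `n`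
determined by the coefficient matrix `c`. -/
noncomputable def polyKer {d n : ℕ} (c : MIdx d n → MIdx d n → ℝ) (x y : Fin d → ℝ) : ℝ :=
  ∑ a : MIdx d n, ∑ b : MIdx d n,
    c a b * ((∏ i, x i ^ (a.1 i : ℕ)) * ∏ i, y i ^ (b.1 i : ℕ))

/-- **Rank bound for polynomial kernels over a set.** A polynomial kernel of degree at
most `n` on `ℝ^d`, restricted to `V × V`, admits a factorization of rank `HF_V(n)`. -/
theorem stmt_3 (d n : ℕ) (V : Set (Fin d → ℝ)) (c : MIdx d n → MIdx d n → ℝ)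
    (hsym : ∀ a b, c a b = c b a) :
    ∃ φ ψ : ↥V → Fin (HF V n) → ℝ,
      ∀ x y : ↥V, polyKer c x.1 y.1 = ∑ i, φ x i * ψ y i := by
  have hfin : Module.Finite ℝ (MvPolynomial.restrictTotalDegree (Fin d) ℝ n) := by
    have hf : Set.Finite {m : Fin d →₀ ℕ | m.degree ≤ n} := by
      refine (Set.finite_Iic (Finsupp.equivFunOnFinite.symm fun _ : Fin d => n)).subset ?_
      intro m hm i
      exact (Finsupp.le_degree i m).trans hm
    have : Finite {m : Fin d →₀ ℕ | m.degree ≤ n} := hf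
    exact Module.Finite.of_basis (MvPolynomial.basisRestrictSupport ℝ {m : Fin d →₀ ℕ | m.degree ≤ n})
  have hfin2 : Module.Finite ℝ (polySpace V n) := by
    unfold polySpace
    infer_instance
  have hmem : ∀ y : ↥V, (fun x : ↥V => polyKer c x.1 y.1) ∈ polySpace V n := by
    intro y
    have he : (fun x : ↥V => polyKer c x.1 y.1) =
        ∑ a : MIdx d n, (∑ b : MIdx d n, c a b * ∏ i, y.1 i ^ (b.1 i : ℕ)) •
          (fun x : ↥V => ∏ i, x.1 i ^ (a.1 i : ℕ)) := by
      funext x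
      simp only [polyKer, Finset.sum_apply, Pi.smul_apply, smul_eq_mul, Finset.sum_mul]
      refine Finset.sum_congr rfl fun a _ => Finset.sum_congr rfl fun b _ => ?_
      ring
    rw [he]
    refine Submodule.sum_mem _ fun a _ => Submodule.smul_mem _ _ ?_
    refine ⟨∏ i, MvPolynomial.X i ^ (a.1 i : ℕ), ?_, ?_⟩
    · rw [SetLike.mem_coe, MvPolynomial.mem_restrictTotalDegree]
      refine (MvPolynomial.totalDegree_finset_prod _ _).trans (le_trans ?_ a.2)
      refine Finset.sum_le_sum fun i _ => ?_
      rw [MvPolynomial.totalDegree_X_pow]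
    · funext x
      simp [restrictEval]
  let b : Module.Basis (Fin (HF V n)) ℝ (polySpace V n) := Module.finBasis ℝ (polySpace V n)
  refine ⟨fun x i => (b i : ↥V → ℝ) x, fun y i => b.repr ⟨_, hmem y⟩ i, fun x y => ?_⟩
  have h := congrArg (fun f : polySpace V n => (f : ↥V → ℝ) x) (b.sum_repr ⟨_, hmem y⟩)
  simp only [Submodule.coe_sum, Submodule.coe_smul, Finset.sum_apply, Pi.smul_apply,
    smul_eq_mul] at h
  rw [← h]
  exact Finset.sum_congr rfl fun i _ => mul_comm _ _
end

section
/- Let V ⊆ ℝ^d, let n ∈ ℕ, let K be a polynomial kernel of degree at most n on ℝ^d, and let M = HF_V(n). Let x₁, …, x_M ∈ V be points such that the evaluation map g ↦ (g(x₁), …, g(x_M)) is a bijection from the space of restrictions to V of polynomials of degree at most n onto ℝ^M. Then the rank of K restricted to V × V equals the rank of the M × M matrix H with entries H_{ij} = K(xᵢ, xⱼ). -/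
/-- The rank of the kernel `K` restricted to `V × V`: the least `r` such that there are
feature maps `φ, ψ : V → ℝ^r` with `K(x,y) = ⟨φ(x), ψ(y)⟩` on `V × V`. -/
noncomputable def rankOn {X : Type*} (V : Set X) (K : X → X → ℝ) : ℕ :=
  sInf {r : ℕ | ∃ φ ψ : ↥V → Fin r → ℝ, ∀ x y : ↥V, K x.1 y.1 = ∑ i, φ x i * ψ y i}

theorem aux_factor {m : ℕ} (H : Matrix (Fin m) (Fin m) ℝ) :
    ∃ (A : Matrix (Fin m) (Fin H.rank) ℝ) (B : Matrix (Fin H.rank) (Fin m) ℝ), H = A * B := by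
  let b : Module.Basis (Fin H.rank) ℝ (LinearMap.range H.mulVecLin) :=
    Module.finBasisOfFinrankEq ℝ _ rfl
  let col : Fin m → LinearMap.range H.mulVecLin :=
    fun j => ⟨H.mulVecLin (Pi.single j 1), LinearMap.mem_range_self _ _⟩
  refine ⟨Matrix.of fun i k => (b k : Fin m → ℝ) i,
    Matrix.of fun k j => b.repr (col j) k, ?_⟩
  ext i j
  have h := congrArg (fun v : LinearMap.range H.mulVecLin => (v : Fin m → ℝ) i)
    (b.sum_repr (col j))
  simp only [Submodule.coe_sum, Submodule.coe_smul, Finset.sum_apply, Pi.smul_apply,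
    smul_eq_mul] at h
  rw [Matrix.mul_apply]
  have h2 : (col j : Fin m → ℝ) i = H i j := by
    simp [col]
  rw [← h2, ← h]
  exact Finset.sum_congr rfl fun k _ => mul_comm _ _

theorem aux_mono {d n : ℕ} (V : Set (Fin d → ℝ)) (a : MIdx d n) :
    (fun v : ↥V => ∏ i, v.1 i ^ (a.1 i : ℕ)) ∈ polySpace V n := by
  refine ⟨∏ i, MvPolynomial.X i ^ (a.1 i : ℕ), ?_, ?_⟩
  · rw [SetLike.mem_coe, MvPolynomial.mem_restrictTotalDegree]
    refine (MvPolynomial.totalDegree_finsetProd _ _).trans (le_trans ?_ a.2)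
    refine Finset.sum_le_sum fun i _ => ?_
    simp
  · funext v
    simp [restrictEval]

/-- **Exact rank formula for polynomial kernels over a set.** If `x₁, …, x_M ∈ V`
(`M = HF_V(n)`) are points for which evaluation is a bijection from the space of
restrictions of degree-`≤ n` polynomials onto `ℝ^M`, then the rank of the polynomial
kernel `K` restricted to `V × V` equals the rank of the matrix `(K(xᵢ, xⱼ))ᵢⱼ`. -/
theorem stmt_5 (d n : ℕ) (V : Set (Fin d → ℝ)) (c : MIdx d n → MIdx d n → ℝ)
    (hsym : ∀ a b, c a b = c b a)
    (x : Fin (HF V n) → ↥V)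
    (hx : Function.Bijective
      (fun (g : ↥(polySpace V n)) (j : Fin (HF V n)) => (g : ↥V → ℝ) (x j))) :
    rankOn V (polyKer c) =
      (Matrix.of fun i j : Fin (HF V n) => polyKer c (x i).1 (x j).1).rank := by
  set H := Matrix.of fun i j : Fin (HF V n) => polyKer c (x i).1 (x j).1 with hH
  obtain ⟨hinj, hsurj⟩ := hx
  choose l hl using fun i : Fin (HF V n) => hsurj (Pi.single i 1)
  have hl' : ∀ i j, (l i : ↥V → ℝ) (x j) = (Pi.single i 1 : Fin (HF V n) → ℝ) j :=
    fun i j => congrFun (hl i) j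
  have hrep : ∀ f ∈ polySpace V n, ∀ v, f v = ∑ i, f (x i) * (l i : ↥V → ℝ) v := by
    intro f hf v
    have h : (⟨f, hf⟩ : ↥(polySpace V n)) = ∑ i, f (x i) • l i := by
      apply hinj
      funext j
      simp [hl', Pi.single_apply]
    have h2 := congrArg (fun g : ↥(polySpace V n) => (g : ↥V → ℝ) v) h
    simpa using h2
  have hcomm : ∀ u v, polyKer c u v = polyKer c v u := by
    intro u v
    unfold polyKer
    rw [Finset.sum_comm]
    refine Finset.sum_congr rfl fun a _ => Finset.sum_congr rfl fun b _ => ?_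
    rw [hsym b a, mul_comm (∏ i, u i ^ _)]
  have hmem : ∀ y : Fin d → ℝ, (fun v : ↥V => polyKer c v.1 y) ∈ polySpace V n := by
    intro y
    have : (fun v : ↥V => polyKer c v.1 y) = ∑ a : MIdx d n,
        (∑ b : MIdx d n, c a b * ∏ i, y i ^ (b.1 i : ℕ)) •
          (fun v : ↥V => ∏ i, v.1 i ^ (a.1 i : ℕ)) := by
      funext v
      simp only [polyKer, Finset.sum_apply, Pi.smul_apply, smul_eq_mul, Finset.sum_mul]
      refine Finset.sum_congr rfl fun a _ => Finset.sum_congr rfl fun b _ => ?_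
      ring
    rw [this]
    exact Submodule.sum_mem _ fun a _ => Submodule.smul_mem _ _ (aux_mono V a)
  have hK : ∀ u v : ↥V, polyKer c u.1 v.1 =
      ∑ i, ∑ j, H i j * (l j : ↥V → ℝ) v * (l i : ↥V → ℝ) u := by
    intro u v
    rw [hrep _ (hmem v.1) u]
    refine Finset.sum_congr rfl fun i _ => ?_
    rw [hcomm, hrep _ (hmem (x i).1) v, Finset.sum_mul]
    refine Finset.sum_congr rfl fun j _ => ?_
    rw [hcomm]
    rfl
  have hin : H.rank ∈ {r : ℕ | ∃ φ ψ : ↥V → Fin r → ℝ,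
      ∀ x y : ↥V, polyKer c x.1 y.1 = ∑ i, φ x i * ψ y i} := by
    obtain ⟨A, B, hAB⟩ := aux_factor H
    have hAB' : ∀ i j, H i j = ∑ k, A i k * B k j := fun i j =>
      (congrFun (congrFun hAB i) j).trans (Matrix.mul_apply)
    refine ⟨fun u k => ∑ i, (l i : ↥V → ℝ) u * A i k,
      fun v k => ∑ j, B k j * (l j : ↥V → ℝ) v, fun u v => ?_⟩
    rw [hK]
    simp only [hAB', Finset.sum_mul_sum]
    simp only [Finset.sum_mul]
    symm
    rw [Finset.sum_comm]
    refine Finset.sum_congr rfl fun i _ => ?_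
    rw [Finset.sum_comm]
    refine Finset.sum_congr rfl fun j _ => Finset.sum_congr rfl fun k _ => ?_
    ring
  apply le_antisymm
  · exact Nat.sInf_le hin
  · refine le_csInf ⟨_, hin⟩ ?_
    rintro r ⟨φ, ψ, h⟩
    have hf : H = (Matrix.of fun i (k : Fin r) => φ (x i) k) *
        (Matrix.of fun (k : Fin r) j => ψ (x j) k) := by
      ext i j
      simp [hH, Matrix.mul_apply, h]
    rw [hf]
    refine (Matrix.rank_mul_le_left _ _).trans ?_
    simpa using Matrix.rank_le_card_width (Matrix.of fun i (k : Fin r) => φ (x i) k)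
end

section
/- Let V ⊆ ℝ^d, let n ∈ ℕ, and let K(x,y) = Σ_{|α| ≤ n, |β| ≤ n} c_{αβ} x^α y^β be a polynomial kernel of degree at most n whose symmetric coefficient matrix C = (c_{αβ}) (indexed by multi-indices of total degree at most n) is positive definite. Then the rank of K restricted to V × V equals HF_V(n): there exist φ, ψ : V → ℝ^{HF_V(n)} with K(x,y) = ⟨φ(x), ψ(y)⟩ on V × V, and no such factorization exists with fewer than HF_V(n) coordinates. -/
noncomputable def mon6 {d n : ℕ} (x : Fin d → ℝ) (a : MIdx d n) : ℝ :=
  ∏ i, x i ^ (a.1 i : ℕ)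

noncomputable def spanM6 {d : ℕ} (n : ℕ) (V : Set (Fin d → ℝ)) : Submodule ℝ (MIdx d n → ℝ) :=
  Submodule.span ℝ (Set.range fun x : ↥V => mon6 (n := n) x.1)

noncomputable def mapS6 {d : ℕ} (n : ℕ) (V : Set (Fin d → ℝ)) :
    Module.Dual ℝ (spanM6 n V) →ₗ[ℝ] (↥V → ℝ) where
  toFun f := fun x => f ⟨mon6 x.1, Submodule.subset_span ⟨x, rfl⟩⟩
  map_add' p q := by funext x; simp
  map_smul' c p := by funext x; simp

noncomputable def mapA6 {d n : ℕ} (V : Set (Fin d → ℝ)) (c : MIdx d n → MIdx d n → ℝ) :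
    (MIdx d n → ℝ) →ₗ[ℝ] (↥V → ℝ) where
  toFun w := fun x => ∑ a, ∑ b, mon6 x.1 a * c a b * w b
  map_add' p q := by funext x; simp [mul_add, Finset.sum_add_distrib]
  map_smul' r p := by
    funext x
    simp only [Pi.smul_apply, smul_eq_mul, RingHom.id_apply, Finset.mul_sum]
    refine Finset.sum_congr rfl fun a _ => Finset.sum_congr rfl fun b _ => by ring

lemma polySpace_le6 {d : ℕ} (n : ℕ) (V : Set (Fin d → ℝ)) :
    polySpace V n ≤ LinearMap.range (mapS6 n V) := by
  rintro _ ⟨p, hp, rfl⟩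
  have hp' : p.totalDegree ≤ n := (MvPolynomial.mem_restrictTotalDegree _ _ _).1 hp
  have h : restrictEval V p = ∑ s ∈ p.support, p.coeff s •
      (fun x : ↥V => ∏ i, x.1 i ^ s i) := by
    funext x
    simp [restrictEval, MvPolynomial.eval_eq']
  rw [h]
  refine Submodule.sum_mem _ fun s hs => Submodule.smul_mem _ _ ?_
  have hsn : ∑ i, s i ≤ n := by
    have := MvPolynomial.le_totalDegree hs
    rw [Finsupp.sum_fintype _ _ (fun _ => rfl)] at this
    exact this.trans hp'
  have hlt : ∀ i, s i < n + 1 := fun i =>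
    Nat.lt_succ_of_le ((Finset.single_le_sum (f := fun i => s i) (fun _ _ => Nat.zero_le _)
      (Finset.mem_univ i)).trans hsn)
  refine ⟨(LinearMap.proj (R := ℝ) (φ := fun _ : MIdx d n => ℝ)
    ⟨fun i => ⟨s i, hlt i⟩, hsn⟩).comp (spanM6 n V).subtype, ?_⟩
  funext x
  simp [mapS6, mon6]

lemma mon_mem6 {d n : ℕ} (V : Set (Fin d → ℝ)) (a : MIdx d n) :
    (fun x : ↥V => mon6 x.1 a) ∈ polySpace V n := by
  refine ⟨MvPolynomial.monomial (Finsupp.equivFunOnFinite.symm fun i => (a.1 i : ℕ)) 1, ?_, ?_⟩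
  · refine (MvPolynomial.mem_restrictTotalDegree _ _ _).2 ?_
    rw [MvPolynomial.totalDegree_monomial _ one_ne_zero,
      Finsupp.sum_fintype _ _ (fun _ => rfl)]
    simpa using a.2
  · funext x
    simp [restrictEval, MvPolynomial.eval_monomial, mon6, Finsupp.prod_fintype]

lemma ker_eq6 {d n : ℕ} (V : Set (Fin d → ℝ)) (c : MIdx d n → MIdx d n → ℝ) (x y : ↥V) :
    polyKer c x.1 y.1 = mapA6 V c (mon6 y.1) x := by
  simp only [polyKer, mapA6, mon6, LinearMap.coe_mk, AddHom.coe_mk]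
  refine Finset.sum_congr rfl fun a _ => Finset.sum_congr rfl fun b _ => by ring

lemma inj6 {d n : ℕ} (V : Set (Fin d → ℝ)) (c : MIdx d n → MIdx d n → ℝ)
    (hpd : ∀ v : MIdx d n → ℝ, v ≠ 0 → 0 < ∑ a, ∑ b, v a * c a b * v b)
    (w : MIdx d n → ℝ) (hw : w ∈ spanM6 n V) (h0 : mapA6 V c w = 0) : w = 0 := by
  have key : ∀ u ∈ spanM6 n V, ∑ a, ∑ b, u a * c a b * w b = 0 := by
    intro u hu
    induction hu using Submodule.span_induction with
    | mem u hu =>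
      obtain ⟨x, rfl⟩ := hu
      exact congrFun h0 x
    | zero => simp
    | add u v _ _ h1 h2 => simp [add_mul, Finset.sum_add_distrib, h1, h2]
    | smul r u _ h1 =>
      simp only [Pi.smul_apply, smul_eq_mul, mul_assoc, ← Finset.mul_sum]
      simp only [mul_assoc, ← Finset.mul_sum] at h1
      rw [h1, mul_zero]
  by_contra hne
  exact (hpd w hne).ne' (key w hw)

/-- **Rank of a polynomial kernel with positive definite coefficient matrix.** If the
symmetric coefficient matrix of the polynomial kernel `K` of degree at most `n` is
positive definite, then the rank of `K` restricted to `V × V` equals `HF_V(n)`: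
a factorization with `HF_V(n)` coordinates exists, and none with fewer. -/
theorem stmt_6 (d n : ℕ) (V : Set (Fin d → ℝ)) (c : MIdx d n → MIdx d n → ℝ)
    (hsym : ∀ a b, c a b = c b a)
    (hpd : ∀ v : MIdx d n → ℝ, v ≠ 0 → 0 < ∑ a, ∑ b, v a * c a b * v b) :
    (∃ φ ψ : ↥V → Fin (HF V n) → ℝ,
      ∀ x y : ↥V, polyKer c x.1 y.1 = ∑ i, φ x i * ψ y i) ∧
    ∀ r : ℕ, r < HF V n →
      ¬ ∃ φ ψ : ↥V → Fin r → ℝ,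
          ∀ x y : ↥V, polyKer c x.1 y.1 = ∑ i, φ x i * ψ y i := by
  have hfd : FiniteDimensional ℝ (polySpace V n) :=
    Submodule.finiteDimensional_of_le (polySpace_le6 n V)
  constructor
  · let e : Module.Basis (Fin (HF V n)) ℝ (polySpace V n) := Module.finBasis ℝ (polySpace V n)
    refine ⟨fun x i => (e i).1 x, fun y i => ∑ a, e.repr ⟨_, mon_mem6 V a⟩ i *
      ∑ b, c a b * mon6 y.1 b, fun x y => ?_⟩
    have hm : ∀ a : MIdx d n, mon6 x.1 a =
        ∑ i, e.repr ⟨_, mon_mem6 V a⟩ i * (e i).1 x := by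
      intro a
      have h := congrArg (fun f : polySpace V n => f.1 x) (e.sum_repr ⟨_, mon_mem6 V a⟩)
      simp only [Submodule.coe_sum, Finset.sum_apply, Submodule.coe_smul, Pi.smul_apply,
        smul_eq_mul] at h
      exact h.symm
    have h1 : polyKer c x.1 y.1 = ∑ a, mon6 x.1 a * ∑ b, c a b * mon6 y.1 b := by
      rw [ker_eq6]
      simp only [mapA6, LinearMap.coe_mk, AddHom.coe_mk, Finset.mul_sum, mul_assoc]
    rw [h1]
    simp only [hm, Finset.sum_mul]
    rw [Finset.sum_comm]
    refine Finset.sum_congr rfl fun i _ => ?_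
    rw [Finset.mul_sum]
    refine Finset.sum_congr rfl fun a _ => by ring
  · rintro r hr ⟨φ, ψ, h⟩
    have h1 : HF V n ≤ Module.finrank ℝ (spanM6 n V) := by
      calc HF V n ≤ Module.finrank ℝ (LinearMap.range (mapS6 n V)) :=
            Submodule.finrank_mono (polySpace_le6 n V)
        _ ≤ Module.finrank ℝ (Module.Dual ℝ (spanM6 n V)) := LinearMap.finrank_range_le _
        _ = _ := Subspace.dual_finrank_eq
    let P : Submodule ℝ (↥V → ℝ) := Submodule.span ℝ (Set.range fun i : Fin r => fun x => φ x i)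
    have hP : Module.finrank ℝ P ≤ r := by
      exact (finrank_range_le_card (R := ℝ) (fun i : Fin r => fun x => φ x i)).trans
        (Fintype.card_fin r).le
    have hmap : ∀ w ∈ spanM6 n V, mapA6 V c w ∈ P := by
      intro w hw
      have : spanM6 n V ≤ P.comap (mapA6 V c) := by
        refine Submodule.span_le.2 ?_
        rintro _ ⟨y, rfl⟩
        have : mapA6 V c (mon6 y.1) = ∑ i, ψ y i • (fun x => φ x i) := by
          funext x
          rw [← ker_eq6, h]
          simp [mul_comm]
        change mapA6 V c (mon6 y.1) ∈ P
        rw [this]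
        exact Submodule.sum_mem _ fun i _ => Submodule.smul_mem _ _
          (Submodule.subset_span ⟨i, rfl⟩)
      exact this hw
    have hPfd : FiniteDimensional ℝ P := FiniteDimensional.span_of_finite ℝ (Set.finite_range _)
    have h2 : Module.finrank ℝ (spanM6 n V) ≤ Module.finrank ℝ P := by
      refine LinearMap.finrank_le_finrank_of_injective
        (f := (mapA6 V c).restrict hmap) ?_
      refine (injective_iff_map_eq_zero _).2 ?_
      intro w hw
      exact Subtype.ext (inj6 V c hpd w.1 w.2 (congrArg Subtype.val hw))
    omega
end

section
/- Let V ⊆ ℝ^d, let n ∈ ℕ, let K be a polynomial kernel of degree at most n on ℝ^d, and let r be the rank of K restricted to V × V. Then there exist maps φ, ψ : ℝ^d → ℝ^r, each of whose r coordinate functions is a real polynomial in d variables, such that K(x,y) = ⟨φ(x), ψ(y)⟩ for all x, y ∈ V. If moreover K restricted to V × V is positive semidefinite (i.e., for every finite set of points x₁, …, x_N ∈ V the matrix (K(xᵢ, xⱼ)) is positive semidefinite), then one can take φ = ψ. -/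
theorem h_core {X E : Type*} [AddCommGroup E] [Module ℝ E] [FiniteDimensional ℝ E]
    (m : X → E) (hm : Submodule.span ℝ (Set.range m) = ⊤)
    (B : LinearMap.BilinForm ℝ E) (hB : ∀ u v, B u v = B v u)
    (r : ℕ) (φ ψ : X → Fin r → ℝ) (h : ∀ x y, B (m x) (m y) = ∑ i, φ x i * ψ y i) :
    ∃ (f : Fin r → (E →ₗ[ℝ] ℝ)) (ε : Fin r → ℝ),
      (∀ i, ∃ e, ε i = B e e) ∧ ∀ u v, B u v = ∑ i, ε i * (f i u * f i v) := by
  classical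
  obtain ⟨b, hb⟩ := LinearMap.BilinForm.exists_orthogonal_basis
    (B := B) ⟨fun u v => by simpa using hB u v⟩
  have hoff : ∀ i j, i ≠ j → B (b i) (b j) = 0 := fun i j hij => hb hij
  have hexp : ∀ u v, B u v = ∑ i, B (b i) (b i) * (b.repr u i * b.repr v i) := by
    intro u v
    conv_lhs => rw [← b.sum_repr u, ← b.sum_repr v]
    simp only [map_sum, LinearMap.sum_apply, map_smul, LinearMap.smul_apply, smul_eq_mul]
    refine Finset.sum_congr rfl fun i _ => ?_
    rw [Finset.sum_eq_single i]
    · ring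
    · intro j _ hj
      rw [hoff _ _ hj]; simp
    · simp
  let S := {i : Fin (Module.finrank ℝ E) // B (b i) (b i) ≠ 0}
  have hsurj : ∀ u : E, ∃ a : X →₀ ℝ, Finsupp.linearCombination ℝ m a = u := by
    intro u
    have : u ∈ Submodule.span ℝ (Set.range m) := by rw [hm]; trivial
    exact Finsupp.mem_span_range_iff_exists_finsupp.1 this
  have hlc : ∀ a a' : X →₀ ℝ, B (Finsupp.linearCombination ℝ m a) (Finsupp.linearCombination ℝ m a')
      = ∑ i, Finsupp.linearCombination ℝ φ a i * Finsupp.linearCombination ℝ ψ a' i := by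
    intro a a'
    induction a using Finsupp.induction_linear with
    | zero => simp
    | add p q hp hq => simp [hp, hq, add_mul, Finset.sum_add_distrib]
    | single x s =>
      induction a' using Finsupp.induction_linear with
      | zero => simp
      | add p q hp hq => simp only [map_add, hp, hq, Pi.add_apply, mul_add, Finset.sum_add_distrib]
      | single y t =>
        simp only [Finsupp.linearCombination_single, map_smul, LinearMap.smul_apply, smul_eq_mul,
          Pi.smul_apply, h, Finset.mul_sum]
        exact Finset.sum_congr rfl fun i _ => by ring
  choose a ha using hsurj
  have hcard : Fintype.card S ≤ r := by
    let P : Matrix S (Fin r) ℝ := fun i k => Finsupp.linearCombination ℝ φ (a (b i.1)) k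
    let Q : Matrix (Fin r) S ℝ := fun k i => Finsupp.linearCombination ℝ ψ (a (b i.1)) k
    have hPQ : P * Q = Matrix.diagonal (fun i : S => B (b i.1) (b i.1)) := by
      ext i j
      have h1 := hlc (a (b i.1)) (a (b j.1))
      rw [ha, ha] at h1
      rw [Matrix.mul_apply, Matrix.diagonal_apply]
      refine h1.symm.trans ?_
      split_ifs with hij
      · rw [hij]
      · exact hoff _ _ fun hh => hij (Subtype.ext hh)
    have hrk : (P * Q).rank = Fintype.card S := by
      apply Matrix.rank_of_isUnit
      rw [hPQ, Matrix.isUnit_iff_isUnit_det, Matrix.det_diagonal, isUnit_iff_ne_zero]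
      exact Finset.prod_ne_zero_iff.2 fun i _ => i.2
    calc Fintype.card S = (P * Q).rank := hrk.symm
      _ ≤ P.rank := Matrix.rank_mul_le_left P Q
      _ ≤ r := by simpa using P.rank_le_card_width
  obtain ⟨g⟩ : Nonempty (S ↪ Fin r) := by
    apply Function.Embedding.nonempty_of_card_le
    simpa using hcard
  refine ⟨Function.extend g (fun i => b.coord i.1) 0,
    Function.extend g (fun i => B (b i.1) (b i.1)) 0, ?_, ?_⟩
  · intro j
    by_cases hj : ∃ i, g i = j
    · obtain ⟨i, rfl⟩ := hj
      exact ⟨b i.1, by rw [g.injective.extend_apply]⟩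
    · exact ⟨0, by rw [Function.extend_apply' _ _ _ hj]; simp⟩
  · intro u v
    have h1 : ∑ i : S, B (b i.1) (b i.1) * (b.repr u i.1 * b.repr v i.1) = B u v := by
      rw [hexp u v]
      refine (Finset.sum_subtype (p := fun i => B (b i) (b i) ≠ 0)
        (Finset.univ.filter fun i => B (b i) (b i) ≠ 0) (by simp)
        (fun i => B (b i) (b i) * (b.repr u i * b.repr v i))).symm.trans ?_
      rw [Finset.sum_filter]
      refine Finset.sum_congr rfl fun i _ => ?_
      by_cases hi : B (b i) (b i) = 0 <;> simp [hi]
    rw [← h1]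
    refine Finset.sum_of_injOn g (g.injective.injOn) (by simp) ?_ ?_
    · intro j _ hj
      have : ¬ ∃ i, g i = j := by simpa using hj
      rw [Function.extend_apply' _ _ _ this]; simp
    · intro i _
      rw [g.injective.extend_apply, g.injective.extend_apply]; rfl

/-- Vector of monomials. -/
noncomputable def h_mon (d n : ℕ) (x : Fin d → ℝ) : MIdx d n → ℝ :=
  fun a => ∏ i, x i ^ (a.1 i : ℕ)

theorem h_poly {d n : ℕ} (F : (MIdx d n → ℝ) →ₗ[ℝ] ℝ) :
    ∃ p : MvPolynomial (Fin d) ℝ, ∀ x, F (h_mon d n x) = MvPolynomial.eval x p := by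
  classical
  refine ⟨∑ a : MIdx d n, MvPolynomial.C (F (Pi.single a 1)) *
    ∏ i, MvPolynomial.X i ^ (a.1 i : ℕ), fun x => ?_⟩
  rw [LinearMap.pi_apply_eq_sum_univ F (h_mon d n x)]
  simp only [map_sum, map_mul, map_prod, map_pow, MvPolynomial.eval_C, MvPolynomial.eval_X]
  refine Finset.sum_congr rfl fun a _ => ?_
  rw [smul_eq_mul, mul_comm]
  congr 2
  ext j
  simp [Pi.single_apply, eq_comm]

theorem h_ker {d n : ℕ} (c : MIdx d n → MIdx d n → ℝ) (x y : Fin d → ℝ) :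
    polyKer c x y = Matrix.toBilin' (Matrix.of c) (h_mon d n x) (h_mon d n y) := by
  rw [Matrix.toBilin'_apply, polyKer]
  refine Finset.sum_congr rfl fun a _ => Finset.sum_congr rfl fun b _ => ?_
  simp only [h_mon, Matrix.of_apply]
  ring

theorem h_main (d n : ℕ) (V : Set (Fin d → ℝ)) (c : MIdx d n → MIdx d n → ℝ)
    (hsym : ∀ a b, c a b = c b a) :
    ∃ (p : Fin (rankOn V (polyKer c)) → MvPolynomial (Fin d) ℝ)
      (ε : Fin (rankOn V (polyKer c)) → ℝ),
      (∀ x ∈ V, ∀ y ∈ V, polyKer c x y =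
        ∑ i, ε i * (MvPolynomial.eval x (p i) * MvPolynomial.eval y (p i))) ∧
      ((∀ (N : ℕ) (z : Fin N → Fin d → ℝ), (∀ j, z j ∈ V) →
        ∀ v : Fin N → ℝ, 0 ≤ ∑ j, ∑ l, v j * polyKer c (z j) (z l) * v l) → ∀ i, 0 ≤ ε i) := by
  classical
  have hne : {r : ℕ | ∃ φ ψ : ↥V → Fin r → ℝ, ∀ x y : ↥V,
      polyKer c x.1 y.1 = ∑ i, φ x i * ψ y i}.Nonempty := by
    let e := Fintype.equivFin (MIdx d n)
    refine ⟨Fintype.card (MIdx d n), fun x i => h_mon d n x.1 (e.symm i),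
      fun y i => ∑ b, c (e.symm i) b * h_mon d n y.1 b, fun x y => ?_⟩
    rw [e.symm.sum_comp (fun a => h_mon d n x.1 a * ∑ b, c a b * h_mon d n y.1 b), polyKer]
    refine Finset.sum_congr rfl fun a _ => ?_
    rw [Finset.mul_sum]
    refine Finset.sum_congr rfl fun b _ => ?_
    simp only [h_mon]; ring
  obtain ⟨φ, ψ, hφ⟩ := Nat.sInf_mem hne
  let U : Submodule ℝ (MIdx d n → ℝ) := Submodule.span ℝ (Set.range fun x : V => h_mon d n x.1)
  let m : V → U := fun x => ⟨h_mon d n x.1, Submodule.subset_span ⟨x, rfl⟩⟩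
  let B0 := Matrix.toBilin' (Matrix.of c)
  let B : LinearMap.BilinForm ℝ U := B0.restrict U
  have hBm : ∀ x y : V, B (m x) (m y) = polyKer c x.1 y.1 := fun x y => (h_ker c x.1 y.1).symm
  have hm : Submodule.span ℝ (Set.range m) = ⊤ := by
    apply Submodule.map_injective_of_injective U.injective_subtype
    rw [Submodule.map_span, ← Set.range_comp, Submodule.map_top, Submodule.range_subtype]
    rfl
  have hB : ∀ u v, B u v = B v u := by
    intro u v
    change B0 u.1 v.1 = B0 v.1 u.1
    simp only [B0, Matrix.toBilin'_apply, Matrix.of_apply]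
    rw [Finset.sum_comm]
    refine Finset.sum_congr rfl fun a _ => Finset.sum_congr rfl fun b _ => ?_
    rw [hsym b a]; ring
  obtain ⟨f, ε, hε, hf⟩ := h_core m hm B hB _ φ ψ (fun x y => (hBm x y).trans (hφ x y))
  choose F hF using fun i => LinearMap.exists_extend (f i)
  choose p hp using fun i => h_poly (F i)
  have hfp : ∀ i (x : V), f i (m x) = MvPolynomial.eval x.1 (p i) := by
    intro i x
    rw [← hp, ← hF]; rfl
  refine ⟨p, ε, ?_, ?_⟩
  · intro x hx y hy
    rw [← hBm ⟨x, hx⟩ ⟨y, hy⟩, hf]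
    refine Finset.sum_congr rfl fun i _ => ?_
    rw [hfp, hfp]
  · intro hpsd i
    obtain ⟨e, he⟩ := hε i
    rw [he]
    have hmem : e ∈ Submodule.span ℝ (Set.range m) := by rw [hm]; trivial
    obtain ⟨N, v, g, hg⟩ := Submodule.mem_span_set'.1 hmem
    choose z hz using fun j => (g j).2
    have := hpsd N (fun j => (z j).1) (fun j => (z j).2) v
    rw [← hg]
    refine this.trans_eq ?_
    simp only [map_sum, LinearMap.sum_apply, map_smul, LinearMap.smul_apply, smul_eq_mul, ← hz, hBm]
    rw [Finset.sum_comm]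
    refine Finset.sum_congr rfl fun a _ => ?_
    try rw [Finset.mul_sum]
    refine Finset.sum_congr rfl fun b _ => ?_
    ring

/-- **Polynomial kernels over a set admit optimal polynomial factorizations.** With
`r` the rank of the polynomial kernel `K` restricted to `V × V`, there exist maps
`φ, ψ : ℝ^d → ℝ^r` whose coordinate functions are polynomials, with
`K(x,y) = ⟨φ(x), ψ(y)⟩` on `V × V`; if moreover `K` is positive semidefinite on `V`,
one can take `φ = ψ`. -/
theorem stmt_7 (d n : ℕ) (V : Set (Fin d → ℝ)) (c : MIdx d n → MIdx d n → ℝ)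
    (hsym : ∀ a b, c a b = c b a) :
    (∃ φ ψ : (Fin d → ℝ) → Fin (rankOn V (polyKer c)) → ℝ,
      (∀ i, ∃ p : MvPolynomial (Fin d) ℝ, ∀ x, φ x i = MvPolynomial.eval x p) ∧
      (∀ i, ∃ p : MvPolynomial (Fin d) ℝ, ∀ x, ψ x i = MvPolynomial.eval x p) ∧
      ∀ x ∈ V, ∀ y ∈ V, polyKer c x y = ∑ i, φ x i * ψ y i) ∧
    ((∀ (N : ℕ) (z : Fin N → Fin d → ℝ), (∀ j, z j ∈ V) →
        ∀ v : Fin N → ℝ, 0 ≤ ∑ j, ∑ l, v j * polyKer c (z j) (z l) * v l) →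
      ∃ φ : (Fin d → ℝ) → Fin (rankOn V (polyKer c)) → ℝ,
        (∀ i, ∃ p : MvPolynomial (Fin d) ℝ, ∀ x, φ x i = MvPolynomial.eval x p) ∧
        ∀ x ∈ V, ∀ y ∈ V, polyKer c x y = ∑ i, φ x i * φ y i) := by
  obtain ⟨p, ε, h1, h2⟩ := h_main d n V c hsym
  refine ⟨⟨fun x i => MvPolynomial.eval x (MvPolynomial.C (ε i) * p i),
    fun x i => MvPolynomial.eval x (p i), fun i => ⟨_, fun x => rfl⟩, fun i => ⟨_, fun x => rfl⟩,
    fun x hx y hy => ?_⟩, fun hpsd =>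
    ⟨fun x i => MvPolynomial.eval x (MvPolynomial.C (Real.sqrt (ε i)) * p i),
      fun i => ⟨_, fun x => rfl⟩, fun x hx y hy => ?_⟩⟩
  · rw [h1 x hx y hy]
    refine Finset.sum_congr rfl fun i _ => ?_
    simp only [map_mul, MvPolynomial.eval_C]; ring
  · rw [h1 x hx y hy]
    refine Finset.sum_congr rfl fun i _ => ?_
    simp only [map_mul, MvPolynomial.eval_C]
    nth_rewrite 1 [← Real.mul_self_sqrt (h2 hpsd i)]
    ring
end

section
/- Let V ⊆ ℝ^d and n ∈ ℕ, and define the Taylor features kernel R_n(x,y) = Σ_{k=0}^{n} ⟨x,y⟩^k / k!. Then the rank of R_n restricted to V × V equals HF_V(n). -/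
/-- The Taylor features kernel `R_n(x,y) = Σ_{k=0}^{n} ⟨x,y⟩^k / k!` on `ℝ^d`. -/
noncomputable def taylorKer (d n : ℕ) (x y : Fin d → ℝ) : ℝ :=
  ∑ k ∈ Finset.range (n + 1), (∑ i, x i * y i) ^ k / (Nat.factorial k : ℝ)

theorem aux_mem_span {X J : Type*} [Fintype J] (g : J → X → ℝ) (j : J) :
    g j ∈ Submodule.span ℝ (Set.range (fun (y : X) (x : X) => ∑ i, g i x * g i y)) := by
  classical
  set G : X → EuclideanSpace ℝ J := fun x => WithLp.toLp 2 (fun i => g i x) with hG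
  set U : Submodule ℝ (EuclideanSpace ℝ J) := Submodule.span ℝ (Set.range G) with hU
  obtain ⟨u, hu, v, hv, huv⟩ := U.exists_add_mem_mem_orthogonal (EuclideanSpace.single j (1:ℝ))
  have key : ∀ w ∈ U, (fun x => ∑ i, g i x * w i) ∈
      Submodule.span ℝ (Set.range (fun (y : X) (x : X) => ∑ i, g i x * g i y)) := by
    intro w hw
    refine Submodule.span_induction (p := fun w _ => (fun x => ∑ i, g i x * w i) ∈
      Submodule.span ℝ (Set.range (fun (y : X) (x : X) => ∑ i, g i x * g i y))) ?_ ?_ ?_ ?_ hw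
    · rintro _ ⟨y, rfl⟩
      exact Submodule.subset_span ⟨y, rfl⟩
    · convert Submodule.zero_mem _
      simp
    · intro a b _ _ ha hb
      convert Submodule.add_mem _ ha hb using 1
      funext x
      simp [mul_add, Finset.sum_add_distrib]
    · intro c a _ ha
      convert Submodule.smul_mem _ c ha using 1
      funext x
      simp only [PiLp.smul_apply, smul_eq_mul, Pi.smul_apply, Finset.mul_sum]
      exact Finset.sum_congr rfl fun i _ => by ring
  have h := key u hu
  convert h using 1
  funext x
  have h1 : inner ℝ (G x) v = 0 :=
    (Submodule.mem_orthogonal _ _).1 hv _ (Submodule.subset_span ⟨x, rfl⟩)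
  have h2 : inner ℝ (G x) (EuclideanSpace.single j (1:ℝ)) = g j x := by
    simp [hG, PiLp.inner_apply, Pi.single_apply]
  have h3 : inner ℝ (G x) u = ∑ i, g i x * u i := by
    simp [hG, PiLp.inner_apply, mul_comm]
  rw [← h2, huv, inner_add_right, h1, add_zero, h3]

theorem aux_rank {X J : Type*} [Fintype J] (V : Set X) (K : X → X → ℝ) (g : J → ↥V → ℝ)
    (hK : ∀ x y : ↥V, K x.1 y.1 = ∑ i, g i x * g i y) :
    rankOn V K = Module.finrank ℝ ↥(Submodule.span ℝ (Set.range g)) := by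
  classical
  have : FiniteDimensional ℝ ↥(Submodule.span ℝ (Set.range g)) :=
    FiniteDimensional.span_of_finite ℝ (Set.finite_range g)
  suffices hmem : Module.finrank ℝ ↥(Submodule.span ℝ (Set.range g)) ∈
      {r : ℕ | ∃ φ ψ : ↥V → Fin r → ℝ, ∀ x y : ↥V, K x.1 y.1 = ∑ i, φ x i * ψ y i} by
    refine le_antisymm (Nat.sInf_le hmem) (le_csInf ⟨_, hmem⟩ ?_)
    rintro r ⟨φ, ψ, h⟩
    have hle : Submodule.span ℝ (Set.range g) ≤
        Submodule.span ℝ (Set.range (fun (i : Fin r) (x : ↥V) => φ x i)) := by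
      rw [Submodule.span_le]
      rintro _ ⟨j, rfl⟩
      refine (Submodule.span_le.2 ?_) (aux_mem_span g j)
      rintro _ ⟨y, rfl⟩
      have : (fun x => ∑ i, g i x * g i y) = ∑ i, ψ y i • (fun x : ↥V => φ x i) := by
        funext x
        rw [← hK, h]
        simp [mul_comm]
      show (fun x => ∑ i, g i x * g i y) ∈ _
      rw [this]
      exact Submodule.sum_mem _ fun i _ =>
        Submodule.smul_mem _ _ (Submodule.subset_span ⟨i, rfl⟩)
    have : FiniteDimensional ℝ
        ↥(Submodule.span ℝ (Set.range (fun (i : Fin r) (x : ↥V) => φ x i))) :=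
      FiniteDimensional.span_of_finite ℝ (Set.finite_range _)
    refine (Submodule.finrank_mono hle).trans ?_
    exact (finrank_range_le_card (R := ℝ) (fun (i : Fin r) (x : ↥V) => φ x i)).trans (by simp)
  let b := Module.finBasis ℝ ↥(Submodule.span ℝ (Set.range g))
  let g' : J → ↥(Submodule.span ℝ (Set.range g)) := fun j =>
    ⟨g j, Submodule.subset_span ⟨j, rfl⟩⟩
  refine ⟨fun x i => (b i).1 x, fun y i => ∑ j, b.repr (g' j) i * g j y, ?_⟩
  intro x y
  rw [hK]
  have hg : ∀ j, g j x = ∑ i, b.repr (g' j) i * (b i).1 x := by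
    intro j
    have := congrArg (fun f : ↥(Submodule.span ℝ (Set.range g)) => f.1 x) (b.sum_repr (g' j))
    simp only [Submodule.coe_sum, Submodule.coe_smul, Finset.sum_apply, Pi.smul_apply,
      smul_eq_mul] at this
    exact this.symm
  calc ∑ j, g j x * g j y = ∑ j, (∑ i, b.repr (g' j) i * (b i).1 x) * g j y :=
        Finset.sum_congr rfl fun j _ => by rw [← hg]
    _ = _ := by
        simp_rw [Finset.sum_mul, Finset.mul_sum]
        rw [Finset.sum_comm]
        exact Finset.sum_congr rfl fun i _ => Finset.sum_congr rfl fun j _ => by ring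

/-- The scaled word features. -/
noncomputable def wordFeat (d n : ℕ) (V : Set (Fin d → ℝ))
    (J : Σ k : Fin (n + 1), Fin k.1 → Fin d) (x : ↥V) : ℝ :=
  (√(Nat.factorial J.1.1 : ℝ))⁻¹ * ∏ t, x.1 (J.2 t)

theorem aux_taylor (d n : ℕ) (V : Set (Fin d → ℝ)) (x y : ↥V) :
    taylorKer d n x.1 y.1 = ∑ J, wordFeat d n V J x * wordFeat d n V J y := by
  rw [taylorKer, Finset.sum_range, Fintype.sum_sigma]
  refine Finset.sum_congr rfl fun k _ => ?_
  rw [Fintype.sum_pow, Finset.sum_div]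
  refine Finset.sum_congr rfl fun w _ => ?_
  simp only [wordFeat]
  have h : (√(Nat.factorial k.1 : ℝ))⁻¹ * (√(Nat.factorial k.1 : ℝ))⁻¹
      = (Nat.factorial k.1 : ℝ)⁻¹ := by
    rw [← mul_inv, Real.mul_self_sqrt (Nat.cast_nonneg _)]
  rw [Finset.prod_mul_distrib, div_eq_mul_inv, ← h]
  ring

theorem aux_span (d n : ℕ) (V : Set (Fin d → ℝ)) :
    Submodule.span ℝ (Set.range (wordFeat d n V)) = polySpace V n := by
  apply le_antisymm
  · rw [Submodule.span_le]
    rintro _ ⟨⟨k, w⟩, rfl⟩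
    refine ⟨(√(Nat.factorial k.1 : ℝ))⁻¹ • ∏ t, MvPolynomial.X (w t), ?_, ?_⟩
    · refine Submodule.smul_mem _ _ ?_
      rw [MvPolynomial.mem_restrictTotalDegree]
      refine (MvPolynomial.totalDegree_finsetProd _ _).trans ?_
      simp
      omega
    · funext x
      simp [restrictEval, wordFeat, MvPolynomial.smul_eval, map_prod]
  · rintro _ ⟨p, hp, rfl⟩
    have hp' := (MvPolynomial.mem_restrictTotalDegree _ _ _).1 hp
    have : restrictEval V p = ∑ m ∈ p.support, p.coeff m • (fun x : ↥V => ∏ i, x.1 i ^ m i) := by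
      funext x
      simp [restrictEval, MvPolynomial.eval_eq']
    rw [this]
    refine Submodule.sum_mem _ fun m hm => Submodule.smul_mem _ _ ?_
    have hdeg := (MvPolynomial.le_totalDegree hm).trans hp'
    obtain ⟨l, hl⟩ := Quot.exists_rep (Finsupp.toMultiset m)
    have hl' : (l : Multiset (Fin d)) = Finsupp.toMultiset m := hl
    have hlen : l.length ≤ n := by
      have := Finsupp.card_toMultiset m
      rw [← hl', Multiset.coe_card] at this
      rw [this]
      exact hdeg
    have hf : (fun x : ↥V => ∏ i, x.1 i ^ m i) = √(Nat.factorial l.length : ℝ) •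
        wordFeat d n V ⟨⟨l.length, by omega⟩, l.get⟩ := by
      funext x
      have h0 : √(Nat.factorial l.length : ℝ) ≠ 0 :=
        (Real.sqrt_pos.2 (by exact_mod_cast Nat.factorial_pos _)).ne'
      simp only [wordFeat, Pi.smul_apply, smul_eq_mul]
      rw [mul_inv_cancel_left₀ h0]
      have h1 : (Multiset.map x.1 (Finsupp.toMultiset m)).prod = ∏ i, x.1 i ^ m i := by
        rw [Finsupp.toMultiset_map, Finsupp.prod_toMultiset,
          Finsupp.prod_mapDomain_index (by simp) (by intros; rw [pow_add]),
          Finsupp.prod_fintype _ _ (by simp)]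
      rw [← h1, ← hl', Multiset.map_coe, Multiset.prod_coe]
      simp
    rw [hf]
    exact Submodule.smul_mem _ _ (Submodule.subset_span ⟨_, rfl⟩)

/-- **Rank of the Taylor features kernel over a set.** The rank of
`R_n(x,y) = Σ_{k=0}^{n} ⟨x,y⟩^k / k!` restricted to `V × V` equals `HF_V(n)`. -/
theorem stmt_8 (d n : ℕ) (V : Set (Fin d → ℝ)) :
    rankOn V (taylorKer d n) = HF V n := by
  rw [aux_rank V _ (wordFeat d n V) (aux_taylor d n V), aux_span, HF]
end

section
/- There is a universal constant C > 0 such that the following holds. Let V ⊆ ℝ^d and k ≥ 1 be such that HF_V(m) ≤ (15m)^k for all integers m ≥ 1, and let 𝒳 be a nonempty compact subset of V. Then for every integer n ≥ 1 there exists a finite subset S ⊆ 𝒳 with log |S| ≤ C·k·log((n+1)·(k+1)) such that sup_{x ∈ 𝒳} |p(x)| ≤ 2·sup_{x ∈ S} |p(x)| for every real polynomial p in d variables of total degree at most n. -/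
theorem aux_basis {N : ℕ} (K : Set (Fin N → ℝ)) (hK : IsCompact K)
    (hs : Submodule.span ℝ K = ⊤) :
    ∃ e : Module.Basis (Fin N) ℝ (Fin N → ℝ), (∀ i, e i ∈ K) ∧
      ∀ v ∈ K, ∀ i, |e.repr v i| ≤ 1 := by
  classical
  let D := (Pi.basisFun ℝ (Fin N)).det
  have hD : ∀ v : Fin N → Fin N → ℝ, D v = Matrix.det (Matrix.of v) := by
    intro v
    simp [D, Pi.basisFun_det]
    rfl
  have hc : Continuous (fun v : Fin N → Fin N → ℝ => |D v|) := by
    simp_rw [hD]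
    exact (Continuous.matrix_det (by exact continuous_id)).abs
  have hKK : IsCompact (Set.pi Set.univ (fun _ : Fin N => K)) := isCompact_univ_pi (fun _ => hK)
  obtain ⟨b0, hb0⟩ : ∃ b : Module.Basis (Fin N) ℝ (Fin N → ℝ), ∀ i, b i ∈ K := by
    let b := Module.Basis.ofSpan hs.ge
    have hb : Set.range b ⊆ K := Module.Basis.ofSpan_subset hs.ge
    let e := b.indexEquiv (Pi.basisFun ℝ (Fin N))
    refine ⟨b.reindex e, fun i => hb ?_⟩
    simp
  obtain ⟨v, hv, hmax⟩ := hKK.exists_isMaxOn ⟨(fun i => b0 i), by intro i _; exact hb0 i⟩ hc.continuousOn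
  have h0 : D b0 ≠ 0 := by
    have := (Module.Basis.isUnit_det (Pi.basisFun ℝ (Fin N)) b0)
    exact this.ne_zero
  have hv0 : D v ≠ 0 := by
    have := hmax (a := (fun i => b0 i)) (by intro i _; exact hb0 i)
    intro h
    have h2 : |D b0| ≤ |D v| := this
    rw [h, abs_zero] at h2
    exact h0 (abs_nonpos_iff.1 h2)
  have hvb := (Module.Basis.is_basis_iff_det (Pi.basisFun ℝ (Fin N)) (v := v)).2 (isUnit_iff_ne_zero.2 hv0)
  let e := Module.Basis.mk hvb.1 hvb.2.ge
  have hev : ∀ i, e i = v i := fun i => by simp [e]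
  refine ⟨e, fun i => by rw [hev]; exact hv i trivial, ?_⟩
  intro w hw i
  have hup : D (Function.update v i w) = e.repr w i * D v := by
    conv_lhs => rw [← e.sum_repr w]
    rw [AlternatingMap.map_update_sum]
    rw [Finset.sum_eq_single i]
    · rw [AlternatingMap.map_update_smul, hev, Function.update_eq_self, smul_eq_mul]
    · intro j _ hj
      rw [AlternatingMap.map_update_smul, hev, AlternatingMap.map_update_self _ _ hj.symm, smul_zero]
    · simp
  have := hmax (a := Function.update v i w) (by
    intro j _
    by_cases h : j = i
    · subst h; simpa using hw
    · simp [h]; exact hv j trivial)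
  simp only [Set.mem_ofPred_eq, hup, abs_mul] at this
  have hp : 0 < |D v| := abs_pos.2 hv0
  nlinarith

theorem aux_fin {d : ℕ} (m : ℕ) : FiniteDimensional ℝ (MvPolynomial.restrictTotalDegree (Fin d) ℝ m) := by
  infer_instance

theorem aux_rank_s10 {d : ℕ} {X V : Set (Fin d → ℝ)} (h : X ⊆ V) (m : ℕ) : HF X m ≤ HF V m := by
  have := aux_fin (d := d) m
  have hm : polySpace X m = (polySpace V m).map (LinearMap.funLeft ℝ ℝ (Set.inclusion h)) := by
    unfold polySpace
    rw [← Submodule.map_comp]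
    rfl
  have : FiniteDimensional ℝ (polySpace V m) := by unfold polySpace; infer_instance
  unfold HF
  rw [hm]
  exact Submodule.finrank_map_le _ _

theorem aux_fekete {d : ℕ} (X : Set (Fin d → ℝ)) (hX : IsCompact X) (m : ℕ) :
    ∃ s : Fin (HF X m) → (Fin d → ℝ), (∀ i, s i ∈ X) ∧
      ∀ p : MvPolynomial (Fin d) ℝ, p.totalDegree ≤ m → ∀ x ∈ X,
        |MvPolynomial.eval x p| ≤ ∑ i, |MvPolynomial.eval (s i) p| := by
  have := aux_fin (d := d) m
  have : FiniteDimensional ℝ (polySpace X m) := by unfold polySpace; infer_instance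
  let b : Module.Basis (Fin (HF X m)) ℝ (polySpace X m) := Module.finBasis ℝ (polySpace X m)
  have hb : ∀ i, ∃ q : MvPolynomial (Fin d) ℝ, restrictEval X q = (b i : X → ℝ) := by
    intro i
    obtain ⟨q, _, hq⟩ := (b i).2
    exact ⟨q, hq⟩
  choose q hq using hb
  have hq' : ∀ i (x : X), MvPolynomial.eval (x : Fin d → ℝ) (q i) = (b i : X → ℝ) x :=
    fun i x => congrFun (hq i) x
  let φ : (Fin d → ℝ) → (Fin (HF X m) → ℝ) := fun x i => MvPolynomial.eval x (q i)
  have hφ : Continuous φ := continuous_pi fun i => MvPolynomial.continuous_eval (q i)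
  have hspan : Submodule.span ℝ (φ '' X) = ⊤ := by
    by_contra hne
    obtain ⟨f, hf0, hf⟩ := Submodule.exists_le_ker_of_lt_top _ (lt_top_iff_ne_top.2 hne)
    apply hf0
    have hz : ∑ i, f (Pi.single i 1) • b i = 0 := by
      ext x
      have h1 : f (φ x) = 0 := hf (Submodule.subset_span ⟨x, x.2, rfl⟩)
      rw [LinearMap.pi_apply_eq_sum_univ] at h1
      simp only [Submodule.coe_sum, Submodule.coe_smul, Finset.sum_apply, Pi.smul_apply,
        ← hq', smul_eq_mul, Submodule.coe_zero, Pi.zero_apply]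
      rw [← h1]
      refine Finset.sum_congr rfl fun i _ => ?_
      rw [smul_eq_mul, mul_comm]
      congr 2
      ext j
      simp [Pi.single_apply, eq_comm]
    have hz' := Fintype.linearIndependent_iff.1 b.linearIndependent _ hz
    refine LinearMap.pi_ext' fun i => ?_
    ext
    simpa using hz' i
  obtain ⟨e, heK, he⟩ := aux_basis _ (hX.image hφ) hspan
  choose s hsX hs using heK
  refine ⟨s, hsX, ?_⟩
  intro p hp x hx
  let P : polySpace X m := ⟨restrictEval X p, p, by
    simpa [MvPolynomial.mem_restrictTotalDegree] using hp, rfl⟩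
  have hL : ∀ y ∈ X, MvPolynomial.eval y p = ∑ i, b.repr P i * φ y i := by
    intro y hy
    have h1 : ((∑ i, b.repr P i • b i : polySpace X m) : X → ℝ) ⟨y, hy⟩ = MvPolynomial.eval y p := by
      rw [b.sum_repr]; rfl
    rw [← h1]
    simp only [Submodule.coe_sum, Submodule.coe_smul, Finset.sum_apply, Pi.smul_apply,
        ← hq', smul_eq_mul, φ]
  have hx2 : MvPolynomial.eval x p = ∑ j, e.repr (φ x) j * MvPolynomial.eval (s j) p := by
    rw [hL x hx]
    conv_lhs => rw [← e.sum_repr (φ x)]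
    simp only [Finset.sum_apply, Pi.smul_apply, smul_eq_mul, Finset.mul_sum]
    rw [Finset.sum_comm]
    refine Finset.sum_congr rfl fun j _ => ?_
    rw [hL _ (hsX j), hs, Finset.mul_sum]
    exact Finset.sum_congr rfl fun i _ => by ring
  rw [hx2]
  refine (Finset.abs_sum_le_sum_abs _ _).trans (Finset.sum_le_sum fun j _ => ?_)
  rw [abs_mul]
  exact mul_le_of_le_one_left (abs_nonneg _) (he _ ⟨x, hx, rfl⟩ j)

theorem aux_num (n k : ℕ) (hn : 1 ≤ n) :
    (15 * (n * (16 * ((n+1)*(k+1))^2)))^k ≤ 2 ^ (16 * ((n+1)*(k+1))^2) := by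
  set t := (n+1)*(k+1) with ht
  have hnt : n ≤ t := by nlinarith [Nat.zero_le (n*k)]
  have hkt : k ≤ t := by nlinarith [Nat.zero_le (n*k)]
  have ht1 : 1 ≤ t := by omega
  have h1 : 15 * (n * (16 * t^2)) ≤ 2 ^ (16 * t) := by
    calc 15 * (n * (16 * t^2)) ≤ 15 * (t * (16 * t^2)) := by gcongr
      _ = 240 * t^3 := by ring
      _ ≤ 2^8 * (2^t)^3 := by
        gcongr
        · norm_num
        · exact Nat.lt_two_pow_self.le
      _ = 2^(8 + t*3) := by rw [pow_add, pow_mul 2 t 3]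
      _ ≤ _ := Nat.pow_le_pow_right (by norm_num) (by omega)
  have hpos : 0 < 15 * (n * (16 * t^2)) := by positivity
  calc _ ≤ (15 * (n * (16 * t^2)))^t := Nat.pow_le_pow_right hpos hkt
    _ ≤ (2 ^ (16 * t))^t := by gcongr
    _ = _ := by rw [← pow_mul]; ring_nf

/-- **Constant norming sets for varieties.** There is a universal constant `C > 0` such
that: if `V ⊆ ℝ^d` satisfies `HF_V(m) ≤ (15m)^k` for all `m ≥ 1` (with `k ≥ 1`), and `𝒳`
is a nonempty compact subset of `V`, then for every degree `n ≥ 1` there is a finite set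
`S ⊆ 𝒳` with `log |S| ≤ C·k·log((n+1)(k+1))` such that every polynomial of total degree
at most `n` satisfies `sup_𝒳 |p| ≤ 2 · sup_S |p|`. -/
theorem stmt_10 :
    ∃ C : ℝ, 0 < C ∧
      ∀ (d : ℕ) (V : Set (Fin d → ℝ)) (k : ℕ), 1 ≤ k →
        (∀ m : ℕ, 1 ≤ m → (HF V m : ℝ) ≤ (15 * m : ℝ) ^ k) →
        ∀ X : Set (Fin d → ℝ), X.Nonempty → IsCompact X → X ⊆ V →
          ∀ n : ℕ, 1 ≤ n →
            ∃ S : Finset (Fin d → ℝ), ↑S ⊆ X ∧ S.Nonempty ∧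
              Real.log S.card ≤ C * k * Real.log (((n : ℝ) + 1) * ((k : ℝ) + 1)) ∧
              ∀ p : MvPolynomial (Fin d) ℝ, p.totalDegree ≤ n →
                ∀ x ∈ X, ∃ y ∈ S,
                  |MvPolynomial.eval x p| ≤ 2 * |MvPolynomial.eval y p| := by
  classical
  refine ⟨7, by norm_num, ?_⟩
  intro d V k hk hV X hXne hX hXV n hn
  set t := (n+1)*(k+1) with ht
  have ht4 : 4 ≤ t := by nlinarith
  have hnt : n ≤ t := by nlinarith [Nat.zero_le (n*k)]
  set r := 16 * t^2 with hr
  have hr0 : r ≠ 0 := by positivity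
  have hr1 : 1 ≤ n * r := Nat.mul_pos hn (Nat.pos_of_ne_zero hr0)
  obtain ⟨s, hsX, hs⟩ := aux_fekete X hX (n*r)
  have hN : HF X (n*r) ≤ (15 * (n * r))^k := by
    refine (aux_rank_s10 hXV _).trans ?_
    have := hV (n*r) hr1
    exact_mod_cast this
  have hN2 : HF X (n*r) ≤ 2^r := hN.trans (aux_num n k hn)
  have hNpos : 0 < HF X (n*r) := by
    obtain ⟨x, hx⟩ := hXne
    have h1 := hs 1 (by simp) x hx
    by_contra h
    have h0 : HF X (n*r) = 0 := by omega
    have : IsEmpty (Fin (HF X (n*r))) := by rw [h0]; infer_instance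
    simp at h1
    norm_num [h0] at h1
  haveI : Nonempty (Fin (HF X (n*r))) := ⟨⟨0, hNpos⟩⟩
  have hne : (Finset.univ.image s).Nonempty := Finset.univ_nonempty.image s
  refine ⟨Finset.univ.image s, ?_, hne, ?_, ?_⟩
  · intro y hy
    simp at hy
    obtain ⟨i, rfl⟩ := hy
    exact hsX i
  · have hc : (Finset.univ.image s).card ≤ t^(7*k) := by
      calc (Finset.univ.image s).card ≤ HF X (n*r) := by
            simpa using Finset.card_image_le (s := Finset.univ) (f := s)
        _ ≤ _ := hN
        _ ≤ (t^7)^k := by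
          gcongr
          calc 15 * (n * r) ≤ 15 * (t * (16 * t^2)) := by gcongr
            _ = 240 * t^3 := by ring
            _ ≤ 4^4 * t^3 := by gcongr; norm_num
            _ ≤ t^4 * t^3 := by gcongr
            _ = t^7 := by ring
        _ = _ := by rw [pow_mul]
    have hc' : ((Finset.univ.image s).card : ℝ) ≤ (((n:ℝ)+1)*((k:ℝ)+1))^(7*k) := by
      rw [ht] at hc; exact_mod_cast hc
    have := Real.log_le_log (by exact_mod_cast hne.card_pos) hc'
    rw [Real.log_pow] at this
    push_cast at this
    exact this
  · intro p hp x hx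
    obtain ⟨y, hy, hmax⟩ := Finset.exists_max_image (Finset.univ.image s)
      (fun y => |MvPolynomial.eval y p|) hne
    refine ⟨y, hy, ?_⟩
    have h1 := hs (p^r) ((MvPolynomial.totalDegree_pow p r).trans (by
      rw [mul_comm n r]; gcongr)) x hx
    simp only [map_pow, abs_pow] at h1
    refine le_of_pow_le_pow_left₀ hr0 (by positivity) ?_
    rw [mul_pow]
    calc _ ≤ _ := h1
      _ ≤ ∑ i : Fin (HF X (n*r)), |MvPolynomial.eval y p|^r := by
        refine Finset.sum_le_sum fun i _ => ?_
        have := hmax (s i) (by simp)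
        gcongr
      _ = (HF X (n*r) : ℝ) * |MvPolynomial.eval y p|^r := by simp
      _ ≤ _ := by
        gcongr
        exact_mod_cast hN2
end

section
/- Let 𝒳 ⊆ ℝ^d be a nonempty compact set and n ∈ ℕ. Let W be the space of restrictions to 𝒳 of real polynomials of total degree at most n, let N = dim W, and let p₁, …, p_N be polynomials of degree at most n whose restrictions to 𝒳 form a basis of W. Suppose (x₁, …, x_N) ∈ 𝒳^N maximizes the function (y₁, …, y_N) ↦ |det (pᵢ(yⱼ))_{i,j}| over 𝒳^N (such a maximizer exists by compactness, and the maximum value is nonzero). Then for every real polynomial p of total degree at most n, sup_{x ∈ 𝒳} |p(x)| ≤ N · max_{1 ≤ j ≤ N} |p(xⱼ)|. -/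
theorem fek_exists {T : Type*} {N : ℕ} (f : Fin N → T → ℝ) (h : LinearIndependent ℝ f) :
    ∃ y : Fin N → T, (Matrix.of fun i j => f i (y j)).det ≠ 0 := by
  classical
  let e : T → Fin N → ℝ := fun t i => f i t
  have hs : Submodule.span ℝ (Set.range e) = ⊤ := by
    by_contra hne
    obtain ⟨φ, hφ, hk⟩ := Submodule.exists_le_ker_of_lt_top _ (lt_top_iff_ne_top.2 hne)
    apply hφ
    have h0 : ∀ i, φ (Pi.single i 1) = 0 := by
      apply Fintype.linearIndependent_iff.1 h
      funext t
      have h1 : φ (e t) = 0 := hk (Submodule.subset_span ⟨t, rfl⟩)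
      rw [LinearMap.pi_apply_eq_sum_univ φ (e t)] at h1
      simp only [Finset.sum_apply, Pi.smul_apply, smul_eq_mul, Pi.zero_apply]
      rw [← h1]
      refine Finset.sum_congr rfl fun i _ => ?_
      rw [smul_eq_mul, mul_comm]
      congr 2
      funext j
      simp [Pi.single_apply, eq_comm]
    ext i
    simpa using h0 i
  obtain ⟨b, hb, hbs, hbi⟩ := exists_linearIndependent ℝ (Set.range e)
  let B : Module.Basis b ℝ (Fin N → ℝ) := Module.Basis.mk hbi (by
    rw [Subtype.range_coe, hbs, hs])
  let σ : b ≃ Fin N := B.indexEquiv (Pi.basisFun ℝ (Fin N))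
  choose y hy using fun j : Fin N => hb (σ.symm j).2
  refine ⟨y, ?_⟩
  have hli : LinearIndependent ℝ (fun j : Fin N => e (y j)) := by
    have := hbi.comp σ.symm σ.symm.injective
    have he : (fun j : Fin N => e (y j)) = Subtype.val ∘ σ.symm := funext hy
    rw [he]
    exact this
  have hu := Matrix.linearIndependent_cols_iff_isUnit (A := Matrix.of fun i j => f i (y j)) |>.1 hli
  exact ((Matrix.isUnit_iff_isUnit_det _).1 hu).ne_zero

/-- **Fekete sets are norming sets.** Let `𝒳 ⊆ ℝ^d` be nonempty and compact, let `W` be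
the space of restrictions to `𝒳` of polynomials of total degree at most `n`, and let
`N = dim W = HF_𝒳(n)`. Let `p₁, …, p_N` be polynomials of degree at most `n` whose
restrictions to `𝒳` form a basis of `W`, and let `(x₁, …, x_N) ∈ 𝒳^N` maximize
`|det (pᵢ(yⱼ))ᵢⱼ|` over `𝒳^N` (a Fekete set). Then every polynomial `q` of degree at
most `n` satisfies `sup_{z ∈ 𝒳} |q(z)| ≤ N · maxⱼ |q(xⱼ)|`. -/
theorem stmt_11 (d n : ℕ) (X : Set (Fin d → ℝ)) (hne : X.Nonempty) (hX : IsCompact X)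
    (p : Fin (HF X n) → MvPolynomial (Fin d) ℝ)
    (hdeg : ∀ i, (p i).totalDegree ≤ n)
    (hind : LinearIndependent ℝ (fun i => restrictEval X (p i)))
    (hspan : Submodule.span ℝ (Set.range fun i => restrictEval X (p i)) = polySpace X n)
    (x : Fin (HF X n) → ↥X)
    (hmax : ∀ y : Fin (HF X n) → ↥X,
      |(Matrix.of fun i j => MvPolynomial.eval (y j).1 (p i)).det| ≤
        |(Matrix.of fun i j => MvPolynomial.eval (x j).1 (p i)).det|) :
    ∀ q : MvPolynomial (Fin d) ℝ, q.totalDegree ≤ n →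
      ∀ z ∈ X, ∃ j, |MvPolynomial.eval z q| ≤
        (HF X n : ℝ) * |MvPolynomial.eval (x j).1 q| := by
  intro q hq z hz
  have hdet : (Matrix.of fun i j => MvPolynomial.eval (x j).1 (p i)).det ≠ 0 := by
    obtain ⟨y, hy⟩ := fek_exists _ hind
    have h1 := hmax y
    intro h0
    rw [h0, abs_zero] at h1
    exact hy (abs_eq_zero.1 (le_antisymm h1 (abs_nonneg _)))
  have hcoef : ∀ r : MvPolynomial (Fin d) ℝ, r.totalDegree ≤ n →
      ∃ c : Fin (HF X n) → ℝ, ∀ t ∈ X, ∑ i, c i * MvPolynomial.eval t (p i)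
        = MvPolynomial.eval t r := by
    intro r hr
    have hm : restrictEval X r ∈ polySpace X n :=
      Submodule.mem_map_of_mem ((MvPolynomial.mem_restrictTotalDegree _ _ _).2 hr)
    rw [← hspan] at hm
    obtain ⟨c, hc⟩ := (Submodule.mem_span_range_iff_exists_fun ℝ).1 hm
    refine ⟨c, fun t ht => ?_⟩
    have := congrFun hc ⟨t, ht⟩
    simpa [restrictEval] using this
  have hN : Nonempty (Fin (HF X n)) := by
    by_contra hemp
    rw [not_nonempty_iff] at hemp
    obtain ⟨c, hc⟩ := hcoef 1 (by simp)
    have := hc z hz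
    simp at this
  obtain ⟨c, hc⟩ := hcoef q hq
  obtain ⟨j0, hj0⟩ := Finite.exists_max (fun j => |MvPolynomial.eval (x j).1 q|)
  refine ⟨j0, ?_⟩
  set M : Matrix (Fin (HF X n)) (Fin (HF X n)) ℝ :=
    Matrix.of fun i j => MvPolynomial.eval (x j).1 (p i) with hM
  let v : Fin (HF X n) → ℝ := fun i => MvPolynomial.eval z (p i)
  have hw : ∀ j, |M.cramer v j| ≤ |M.det| := by
    intro j
    have h1 := hmax (Function.update x j ⟨z, hz⟩)
    rw [Matrix.cramer_apply]
    convert h1 using 3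
    ext i k
    by_cases hk : k = j
    · subst hk; simp [v]
    · simp [hk, hM]
  have key : M.det * MvPolynomial.eval z q
      = ∑ j, M.cramer v j * MvPolynomial.eval (x j).1 q := by
    have hcr := Matrix.mulVec_cramer M v
    have h2 : ∀ i, M.det * v i = ∑ j, M i j * M.cramer v j := fun i => by
      have := congrFun hcr i
      simpa [Matrix.mulVec, dotProduct] using this.symm
    rw [← hc z hz, Finset.mul_sum]
    calc ∑ i, M.det * (c i * MvPolynomial.eval z (p i))
        = ∑ i, ∑ j, c i * (M i j * M.cramer v j) := by
          refine Finset.sum_congr rfl fun i _ => ?_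
          rw [← Finset.mul_sum, ← h2]; ring
      _ = _ := by
          rw [Finset.sum_comm]
          refine Finset.sum_congr rfl fun j _ => ?_
          rw [← hc _ (x j).2, Finset.mul_sum]
          refine Finset.sum_congr rfl fun i _ => ?_
          simp only [hM, Matrix.of_apply]; ring
  refine le_of_mul_le_mul_left ?_ (abs_pos.2 hdet)
  rw [← abs_mul, key]
  calc _ ≤ ∑ j, |M.cramer v j * MvPolynomial.eval (x j).1 q| := Finset.abs_sum_le_sum_abs _ _
    _ ≤ ∑ _j : Fin (HF X n), |M.det| * |MvPolynomial.eval (x j0).1 q| := by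
        refine Finset.sum_le_sum fun j _ => ?_
        rw [abs_mul]
        exact mul_le_mul (hw j) (hj0 j) (abs_nonneg _) (abs_nonneg _)
    _ = _ := by simp; ring
end

section
/- Let d, k, n ∈ ℕ with 0 < k < d, and let V = {x ∈ ℝ^d : x has at most k nonzero coordinates} be the set of k-sparse vectors (the union of all k-dimensional coordinate subspaces). Then HF_V(n) = Σ_{j=0}^{k} C(d, j)·C(n, j), where C(·,·) denotes the binomial coefficient. -/
open MvPolynomial in
lemma aux_eval {d : ℕ} (p : MvPolynomial (Fin d) ℝ) (S : Finset (Fin d))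
    (h : ∀ y : Fin d → ℝ, (∀ i, i ∉ S → y i = 0) → eval y p = 0)
    (s : Fin d →₀ ℕ) (hs : s.support ⊆ S) : coeff s p = 0 := by
  classical
  set q : MvPolynomial (Fin d) ℝ :=
    ∑ m ∈ p.support.filter (fun m => m.support ⊆ S), monomial m (coeff m p) with hq
  have hq0 : q = 0 := by
    apply MvPolynomial.funext
    intro y
    rw [map_zero, ← h (fun i => if i ∈ S then y i else 0) (by intro i hi; simp [hi]), hq, map_sum,
      MvPolynomial.eval_eq, Finset.sum_filter]
    refine Finset.sum_congr rfl fun m _ => ?_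
    split_ifs with hm
    · rw [eval_monomial, Finsupp.prod]
      congr 1
      exact Finset.prod_congr rfl fun i hi => by simp [hm hi]
    · obtain ⟨i, hi, hiS⟩ := Finset.not_subset.1 hm
      rw [Finset.prod_eq_zero hi, mul_zero]
      simp only [hiS, if_false]
      exact zero_pow (Finsupp.mem_support_iff.1 hi)
  have := congrArg (coeff s) hq0
  rw [hq, coeff_sum] at this
  simp only [coeff_monomial, coeff_zero, Finset.sum_ite_eq', Finset.mem_filter, hs, and_true,
    mem_support_iff] at this
  by_contra hc
  simp [hc] at this

lemma aux_fin_s13 {d : ℕ} (n : ℕ) : {s : Fin d →₀ ℕ | s.degree ≤ n}.Finite :=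
  Finsupp.finite_of_degree_le n

lemma aux_card {d : ℕ} (S : Finset (Fin d)) : ∀ n : ℕ,
    {s : Fin d →₀ ℕ | s.support = S ∧ s.degree ≤ n}.ncard = n.choose S.card := by
  classical
  have hfin : ∀ (S : Finset (Fin d)) n,
      {s : Fin d →₀ ℕ | s.support = S ∧ s.degree ≤ n}.Finite := fun S n =>
    (aux_fin_s13 n).subset fun s hs => hs.2
  induction S using Finset.induction_on with
  | empty =>
    intro n
    have : {s : Fin d →₀ ℕ | s.support = ∅ ∧ s.degree ≤ n} = {0} := by
      ext s
      simp only [Finsupp.support_eq_empty, Set.mem_ofPred_eq, Set.mem_singleton_iff]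
      constructor
      · exact fun h => h.1
      · rintro rfl; simp
    rw [this]; simp
  | insert i S hi ih =>
    intro n
    induction n with
    | zero =>
      have : {s : Fin d →₀ ℕ | s.support = insert i S ∧ s.degree ≤ 0} = ∅ := by
        ext s
        simp only [Set.mem_ofPred_eq, Set.mem_empty_iff_false, iff_false, not_and]
        intro h h'
        have : s = 0 := (Finsupp.degree_eq_zero_iff s).1 (by omega)
        subst this
        simp at h
        exact absurd h.symm (Finset.insert_ne_empty _ _)
      rw [this, Finset.card_insert_of_notMem hi]; simp
    | succ n ihn =>
      have key : {s : Fin d →₀ ℕ | s.support = insert i S ∧ s.degree ≤ n + 1} =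
          (fun s => s + Finsupp.single i 1) ''
            ({s : Fin d →₀ ℕ | s.support = S ∧ s.degree ≤ n} ∪
             {s : Fin d →₀ ℕ | s.support = insert i S ∧ s.degree ≤ n}) := by
        ext s
        simp only [Set.mem_image, Set.mem_union, Set.mem_ofPred_eq]
        constructor
        · rintro ⟨h1, h2⟩
          have hsi : s i ≠ 0 := by
            rw [← Finsupp.mem_support_iff, h1]; exact Finset.mem_insert_self _ _
          have hle : Finsupp.single i 1 ≤ s := by
            rw [Finsupp.single_le_iff]; omega
          have hs : s - Finsupp.single i 1 + Finsupp.single i 1 = s := tsub_add_cancel_of_le hle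
          refine ⟨s - Finsupp.single i 1, ?_, hs⟩
          have hdeg : (s - Finsupp.single i 1).degree ≤ n := by
            have := congrArg Finsupp.degree hs
            rw [map_add, Finsupp.degree_single] at this
            omega
          have hm : ∀ j, s j ≠ 0 ↔ j = i ∨ j ∈ S := by
            intro j; rw [← Finsupp.mem_support_iff, h1, Finset.mem_insert]
          by_cases h : s i = 1
          · left
            refine ⟨?_, hdeg⟩
            ext j
            rw [Finsupp.mem_support_iff, Finsupp.tsub_apply, Finsupp.single_apply]
            by_cases hj : i = j
            · subst hj; simp [h, hi]
            · simp [hj, hm, Ne.symm hj]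
          · right
            refine ⟨?_, hdeg⟩
            ext j
            rw [Finsupp.mem_support_iff, Finsupp.tsub_apply, Finsupp.single_apply]
            by_cases hj : i = j
            · subst hj; simp; omega
            · simp [hj, hm, Ne.symm hj]
        · rintro ⟨t, ht, rfl⟩
          rw [map_add, Finsupp.degree_single]
          have hd : t.degree ≤ n := by rcases ht with h | h <;> exact h.2
          refine ⟨?_, by omega⟩
          have hm : ∀ j, j ≠ i → (t j ≠ 0 ↔ j ∈ S) := by
            intro j hj
            rw [← Finsupp.mem_support_iff]
            rcases ht with h | h
            · rw [h.1]
            · rw [h.1]; simp [hj]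
          ext j
          rw [Finsupp.mem_support_iff, Finsupp.add_apply, Finsupp.single_apply]
          by_cases hj : i = j
          · subst hj; simp
          · simp [hj, Ne.symm hj, ← hm j (Ne.symm hj)]
      rw [key, Set.ncard_image_of_injective _ (add_left_injective _),
        Set.ncard_union_eq _ (hfin _ _) (hfin _ _), ih, ihn, Finset.card_insert_of_notMem hi,
        Nat.choose_succ_succ]
      rw [Set.disjoint_left]
      rintro s ⟨h1, _⟩ ⟨h2, _⟩
      apply hi
      rw [← h1, h2]; exact Finset.mem_insert_self _ _

lemma aux_count (d k n : ℕ) :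
    {s : Fin d →₀ ℕ | s.support.card ≤ k ∧ s.degree ≤ n}.ncard =
      ∑ j ∈ Finset.range (k + 1), Nat.choose d j * Nat.choose n j := by
  classical
  have hfin : {s : Fin d →₀ ℕ | s.support.card ≤ k ∧ s.degree ≤ n}.Finite :=
    (aux_fin_s13 n).subset fun s hs => hs.2
  rw [Set.ncard_eq_toFinset_card _ hfin,
    Finset.card_eq_sum_card_fiberwise (f := fun s => s.support)
      (t := (Finset.univ : Finset (Finset (Fin d))).filter (fun S => S.card ≤ k))
      (by intro s hs; simp at hs; simp [hs.1])]
  have h1 : ∀ S ∈ (Finset.univ : Finset (Finset (Fin d))).filter (fun S => S.card ≤ k),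
      (hfin.toFinset.filter (fun s => s.support = S)).card = n.choose S.card := by
    intro S hS
    rw [← aux_card S n, ← Set.ncard_coe_finset]
    congr 1
    ext s
    simp at hS
    simp
    constructor
    · rintro ⟨⟨_, h⟩, h'⟩; exact ⟨h', h⟩
    · rintro ⟨h', h⟩; exact ⟨⟨by rw [h']; exact hS, h⟩, h'⟩
  rw [Finset.sum_congr rfl h1, ← Finset.sum_fiberwise_of_maps_to (g := Finset.card)
    (t := Finset.range (k + 1)) (by intro S hS; simp at hS; simp; omega)]
  refine Finset.sum_congr rfl fun j hj => ?_
  have h2 : ((Finset.univ : Finset (Finset (Fin d))).filter (fun S => S.card ≤ k)).filter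
      (fun S => S.card = j) = Finset.powersetCard j Finset.univ := by
    ext S
    simp at hj
    simp [Finset.mem_powersetCard]
    omega
  rw [h2, Finset.sum_congr rfl (g := fun _ => n.choose j)
    (fun S hS => by rw [(Finset.mem_powersetCard.1 hS).2])]
  simp

/-- **Hilbert function of the variety of `k`-sparse vectors.** For `0 < k < d`, the set
`V ⊆ ℝ^d` of vectors with at most `k` nonzero coordinates (the union of all
`k`-dimensional coordinate subspaces) has `HF_V(n) = Σ_{j=0}^{k} C(d,j)·C(n,j)`. -/
theorem stmt_13 (d k n : ℕ) (hk : 0 < k) (hkd : k < d) :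
    HF {x : Fin d → ℝ | ∃ S : Finset (Fin d), S.card ≤ k ∧ ∀ i, i ∉ S → x i = 0} n =
      ∑ j ∈ Finset.range (k + 1), Nat.choose d j * Nat.choose n j := by
  classical
  rw [← aux_count d k n]
  set V := {x : Fin d → ℝ | ∃ S : Finset (Fin d), S.card ≤ k ∧ ∀ i, i ∉ S → x i = 0} with hV
  set M := {s : Fin d →₀ ℕ | s.support.card ≤ k ∧ s.degree ≤ n} with hM
  have hfin : M.Finite := (aux_fin_s13 n).subset fun s hs => hs.2
  have : Fintype M := hfin.fintype
  let f : M → (V → ℝ) := fun s => restrictEval V (MvPolynomial.monomial s.1 1)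
  have hli : LinearIndependent ℝ f := by
    rw [Fintype.linearIndependent_iff]
    intro g hg s
    have hg' : restrictEval V (∑ m : M, MvPolynomial.monomial m.1 (g m)) = 0 := by
      rw [← hg, map_sum]
      refine Finset.sum_congr rfl fun m _ => ?_
      rw [← map_smul, MvPolynomial.smul_monomial, smul_eq_mul, mul_one]
    have := aux_eval (∑ m : M, MvPolynomial.monomial m.1 (g m)) s.1.support
      (fun y hy => congrFun hg' ⟨y, s.1.support, s.2.1, hy⟩) s.1 subset_rfl
    rw [MvPolynomial.coeff_sum] at this
    simpa [MvPolynomial.coeff_monomial, Subtype.coe_inj] using this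
  have hspan : polySpace V n = Submodule.span ℝ (Set.range f) := by
    apply le_antisymm
    · rintro _ ⟨p, hp, rfl⟩
      rw [SetLike.mem_coe, MvPolynomial.mem_restrictTotalDegree] at hp
      rw [p.as_sum, map_sum]
      refine Submodule.sum_mem _ fun m hm => ?_
      by_cases hmk : m.support.card ≤ k
      · have hmM : m ∈ M := by
          refine ⟨hmk, le_trans ?_ hp⟩
          exact MvPolynomial.le_totalDegree hm
        have : restrictEval V (MvPolynomial.monomial m (MvPolynomial.coeff m p)) =
            MvPolynomial.coeff m p • f ⟨m, hmM⟩ := by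
          rw [← map_smul, MvPolynomial.smul_monomial, smul_eq_mul, mul_one]
        rw [this]
        exact Submodule.smul_mem _ _ (Submodule.subset_span ⟨_, rfl⟩)
      · have : restrictEval V (MvPolynomial.monomial m (MvPolynomial.coeff m p)) = 0 := by
          funext x
          obtain ⟨x, S, hS, hx⟩ := x
          have : ¬ m.support ⊆ S := fun h => hmk ((Finset.card_le_card h).trans hS)
          obtain ⟨i, hi, hiS⟩ := Finset.not_subset.1 this
          change MvPolynomial.eval x _ = 0
          rw [MvPolynomial.eval_monomial, Finsupp.prod, Finset.prod_eq_zero hi, mul_zero]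
          rw [hx i hiS]
          exact zero_pow (Finsupp.mem_support_iff.1 hi)
        rw [this]
        exact Submodule.zero_mem _
    · rw [Submodule.span_le]
      rintro _ ⟨s, rfl⟩
      refine ⟨_, ?_, rfl⟩
      rw [SetLike.mem_coe, MvPolynomial.mem_restrictTotalDegree]
      exact (MvPolynomial.totalDegree_monomial_le _ _).trans s.2.2
  rw [HF, hspan, finrank_span_eq_card hli, ← Nat.card_eq_fintype_card, Nat.card_coe_set_eq]
end

section
/- Let m ≥ 1 and n ∈ ℕ, and let V = {x xᵀ : x ∈ ℝ^m} be the set of symmetric rank-at-most-one positive semidefinite m × m real matrices of the form x xᵀ, regarded as a subset of ℝ^{m×m} (coordinates given by the m² matrix entries). Then HF_V(n) = Σ_{k=0}^{n} C(2k + m − 1, m − 1), where C(·,·) denotes the binomial coefficient. -/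
noncomputable def veroA (m : ℕ) : MvPolynomial (Fin m × Fin m) ℝ →ₐ[ℝ] MvPolynomial (Fin m) ℝ :=
  MvPolynomial.aeval (fun q => MvPolynomial.X q.1 * MvPolynomial.X q.2)

noncomputable def veroT (m n : ℕ) : Finset (Fin m →₀ ℕ) :=
  (Finset.range (n + 1)).biUnion (fun k => Finset.finsuppAntidiag Finset.univ (2 * k))

lemma mem_veroT {m n : ℕ} {d : Fin m →₀ ℕ} : d ∈ veroT m n ↔ ∃ k ≤ n, d.degree = 2 * k := by
  simp [veroT, Finsupp.degree_eq_sum, Nat.lt_succ_iff]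

lemma card_veroT {m n : ℕ} (hm : 1 ≤ m) : (veroT m n).card =
    ∑ k ∈ Finset.range (n + 1), Nat.choose (2 * k + m - 1) (m - 1) := by
  rw [veroT, Finset.card_biUnion]
  · refine Finset.sum_congr rfl fun k _ => ?_
    rw [Finset.card_finsuppAntidiag_nat_eq_choose, Finset.card_univ, Fintype.card_fin, add_comm m]
    rw [← Nat.choose_symm (by omega)]
    congr 1
    omega
  · intro a _ b _ hab
    rw [Function.onFun, Finset.disjoint_left]
    intro d h1 h2
    simp only [Finset.mem_finsuppAntidiag] at h1 h2
    omega

lemma veroA_monomial {m : ℕ} (e : Fin m × Fin m →₀ ℕ) :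
    ∃ d : Fin m →₀ ℕ, veroA m (MvPolynomial.monomial e 1) = MvPolynomial.monomial d 1 ∧
      d.degree = 2 * e.degree := by
  induction e using Finsupp.induction_linear with
  | zero => exact ⟨0, by simp [veroA], by simp⟩
  | add f g hf hg =>
    obtain ⟨a, ha, ha'⟩ := hf
    obtain ⟨b, hb, hb'⟩ := hg
    refine ⟨a + b, ?_, ?_⟩
    · have := MvPolynomial.monomial_mul (R := ℝ) (s := f) (s' := g) (a := 1) (b := 1)
      rw [mul_one] at this
      rw [← this, map_mul, ha, hb, MvPolynomial.monomial_mul, mul_one]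
    · rw [map_add, map_add, ha', hb']; ring
  | single q k =>
    refine ⟨Finsupp.single q.1 k + Finsupp.single q.2 k, ?_, ?_⟩
    · rw [veroA, MvPolynomial.aeval_monomial]
      simp [mul_pow, MvPolynomial.X_pow_eq_monomial]
    · simp; ring

lemma exists_sub {m k : ℕ} (d : Fin m →₀ ℕ) (h : d.degree = k + 1) :
    ∃ i, ∃ d' : Fin m →₀ ℕ, d = d' + Finsupp.single i 1 ∧ d'.degree = k := by
  have : ∃ i, d i ≠ 0 := by
    by_contra! hc
    have : d = 0 := by ext i; simp [hc i]
    simp [this] at h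
  obtain ⟨i, hi⟩ := this
  have h1 : d = (d - Finsupp.single i 1) + Finsupp.single i 1 := by
    rw [tsub_add_cancel_of_le]
    rw [Finsupp.single_le_iff]
    omega
  refine ⟨i, _, h1, ?_⟩
  have h2 := congrArg Finsupp.degree h1
  rw [map_add, Finsupp.degree_single] at h2
  omega

lemma veroA_surj {m : ℕ} (k : ℕ) (d : Fin m →₀ ℕ) (h : d.degree = 2 * k) :
    ∃ e : Fin m × Fin m →₀ ℕ, veroA m (MvPolynomial.monomial e 1) = MvPolynomial.monomial d 1 ∧
      e.degree = k := by
  induction k generalizing d with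
  | zero =>
    have : d = 0 := (Finsupp.degree_eq_zero_iff d).1 (by simpa using h)
    exact ⟨0, by simp [veroA, this], by simp⟩
  | succ k ih =>
    obtain ⟨i, d1, rfl, h1⟩ := exists_sub (k := 2 * k + 1) d (by omega)
    obtain ⟨j, d2, rfl, h2⟩ := exists_sub (k := 2 * k) d1 h1
    obtain ⟨e, he, hk⟩ := ih d2 h2
    refine ⟨e + Finsupp.single (i, j) 1, ?_, by simp [hk]⟩
    have := MvPolynomial.monomial_mul (R := ℝ) (s := e) (s' := Finsupp.single (i, j) 1)
      (a := 1) (b := 1)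
    rw [mul_one] at this
    rw [← this, map_mul, he]
    rw [veroA, MvPolynomial.aeval_monomial]
    simp [MvPolynomial.X, add_assoc, add_comm, add_left_comm]

lemma map_veroA (m n : ℕ) :
    (MvPolynomial.restrictTotalDegree (Fin m × Fin m) ℝ n).map (veroA m).toLinearMap =
      MvPolynomial.restrictSupport ℝ (veroT m n : Set (Fin m →₀ ℕ)) := by
  rw [MvPolynomial.restrictTotalDegree, MvPolynomial.restrictSupport_eq_span,
    MvPolynomial.restrictSupport_eq_span, Submodule.map_span]
  congr 1
  ext p
  constructor
  · rintro ⟨_, ⟨e, he, rfl⟩, rfl⟩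
    obtain ⟨d, hd, hd'⟩ := veroA_monomial e
    exact ⟨d, mem_veroT.2 ⟨e.degree, he, hd'⟩, hd.symm⟩
  · rintro ⟨d, hd, rfl⟩
    obtain ⟨k, hk, hd⟩ := mem_veroT.1 hd
    obtain ⟨e, he, he'⟩ := veroA_surj k d hd
    exact ⟨_, ⟨e, he'.trans_le hk, rfl⟩, he⟩

/-- **Hilbert function of the variety of symmetric rank-one matrices.** For `m ≥ 1`, the
set `V = {x xᵀ : x ∈ ℝ^m}` of symmetric rank-at-most-one PSD `m × m` matrices, viewed as
a subset of `ℝ^{m×m}` (coordinates indexed by `Fin m × Fin m`), has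
`HF_V(n) = Σ_{k=0}^{n} C(2k+m-1, m-1)`. -/
theorem stmt_14 (m n : ℕ) (hm : 1 ≤ m) :
    HF {A : Fin m × Fin m → ℝ | ∃ x : Fin m → ℝ, ∀ q : Fin m × Fin m, A q = x q.1 * x q.2}
        n =
      ∑ k ∈ Finset.range (n + 1), Nat.choose (2 * k + m - 1) (m - 1) := by
  set V := {A : Fin m × Fin m → ℝ |
    ∃ x : Fin m → ℝ, ∀ q : Fin m × Fin m, A q = x q.1 * x q.2} with hV
  let φ : (Fin m → ℝ) → V := fun x => ⟨fun q => x q.1 * x q.2, x, fun _ => rfl⟩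
  have hφ : Function.Surjective φ := by
    rintro ⟨A, x, hx⟩
    exact ⟨x, Subtype.ext (funext fun q => (hx q).symm)⟩
  let Φ : (V → ℝ) →ₗ[ℝ] ((Fin m → ℝ) → ℝ) := LinearMap.funLeft ℝ ℝ φ
  have hΦ : Function.Injective Φ := LinearMap.funLeft_injective_of_surjective ℝ ℝ φ hφ
  let E : MvPolynomial (Fin m) ℝ →ₗ[ℝ] ((Fin m → ℝ) → ℝ) :=
    { toFun := fun p x => MvPolynomial.eval x p
      map_add' := fun p q => by funext x; simp
      map_smul' := fun c p => by funext x; simp [MvPolynomial.smul_eval] }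
  have hE : Function.Injective E := fun p q h => MvPolynomial.funext fun x => congrFun h x
  have hcomp : Φ ∘ₗ restrictEval V = E ∘ₗ (veroA m).toLinearMap := by
    refine LinearMap.ext fun p => funext fun x => ?_
    change MvPolynomial.eval (fun q : Fin m × Fin m => x q.1 * x q.2) p =
      MvPolynomial.eval x (veroA m p)
    induction p using MvPolynomial.induction_on with
    | C a => simp [veroA]
    | add p q hp hq => simp [hp, hq]
    | mul_X p q hp => simp [hp, veroA]
  have h1 : (polySpace V n).map Φ =
      (MvPolynomial.restrictSupport ℝ (veroT m n : Set (Fin m →₀ ℕ))).map E := by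
    rw [polySpace, ← Submodule.map_comp, hcomp, Submodule.map_comp, map_veroA]
  rw [HF, (Submodule.equivMapOfInjective Φ hΦ _).finrank_eq, h1,
    ← (Submodule.equivMapOfInjective E hE _).finrank_eq,
    Module.finrank_eq_card_basis (MvPolynomial.basisRestrictSupport ℝ _), ← card_veroT hm]
  simp
end

section
/- Let m₁, m₂ ≥ 1 and n ∈ ℕ, and let V = {x yᵀ : x ∈ ℝ^{m₁}, y ∈ ℝ^{m₂}} be the set of m₁ × m₂ real matrices of rank at most one, regarded as a subset of ℝ^{m₁×m₂} (coordinates given by the m₁m₂ matrix entries). Then HF_V(n) = Σ_{k=0}^{n} C(k + m₁ − 1, m₁ − 1)·C(k + m₂ − 1, m₂ − 1), where C(·,·) denotes the binomial coefficient. -/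
open MvPolynomial in
lemma aux_prod {σ : Type*} [DecidableEq σ] (M : Multiset σ) :
    (M.map (X : σ → MvPolynomial σ ℝ)).prod = monomial (Multiset.toFinsupp M) 1 := by
  induction M using Multiset.induction_on with
  | empty => simp
  | cons a s ih =>
    rw [Multiset.map_cons, Multiset.prod_cons, ih, ← Multiset.singleton_add, map_add,
      Multiset.toFinsupp_singleton, X, monomial_mul, one_mul]

open MvPolynomial in
lemma aux_span_s15 {σ : Type*} [DecidableEq σ] (n : ℕ) :
    restrictTotalDegree σ ℝ n = Submodule.span ℝ
      ((fun M : Multiset σ => (M.map (X : σ → MvPolynomial σ ℝ)).prod) '' {M | M.card ≤ n}) := by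
  rw [restrictTotalDegree, restrictSupport_eq_span]
  congr 1
  ext p
  simp only [aux_prod, Set.mem_image, Set.mem_ofPred_eq]
  constructor
  · rintro ⟨d, hd, rfl⟩
    refine ⟨Finsupp.toMultiset d, ?_, by simp⟩
    rw [Finsupp.card_toMultiset]; exact hd
  · rintro ⟨M, hM, rfl⟩
    refine ⟨Multiset.toFinsupp M, ?_, rfl⟩
    have := Finsupp.card_toMultiset (Multiset.toFinsupp M)
    rw [Multiset.toFinsupp_toMultiset] at this
    exact this.symm.le.trans hM

abbrev Idx (m₁ m₂ n : ℕ) := Σ k : Fin (n+1), Sym (Fin m₁) k × Sym (Fin m₂) k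

def idxM {m₁ m₂ n : ℕ} (t : Idx m₁ m₂ n) : Multiset (Fin m₁ ⊕ Fin m₂) :=
  (t.2.1 : Multiset _).map Sum.inl + (t.2.2 : Multiset _).map Sum.inr

lemma idxM_inj {m₁ m₂ n : ℕ} : Function.Injective (@idxM m₁ m₂ n) := by
  rintro ⟨k, ⟨A, hA⟩, ⟨B, hB⟩⟩ ⟨l, ⟨C, hC⟩, ⟨D, hD⟩⟩ h
  simp only [idxM, Sym.coe_mk] at h
  have hn : ∀ {α β : Type} (S : Multiset α), Multiset.filterMap (fun _ => (none : Option β)) S = 0 := by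
    intro α β S
    induction S using Multiset.induction_on with
    | empty => simp
    | cons a s ih => rw [Multiset.filterMap_cons_none _ _ rfl, ih]
  have h1 : A = C := by
    have := congrArg (Multiset.filterMap Sum.getLeft?) h
    simpa [Multiset.filterMap_add, Multiset.filterMap_map, Function.comp_def, hn] using this
  have h2 : B = D := by
    have := congrArg (Multiset.filterMap Sum.getRight?) h
    simpa [Multiset.filterMap_add, Multiset.filterMap_map, Function.comp_def, hn] using this
  subst h1 h2
  obtain rfl : k = l := Fin.ext (hA.symm.trans hC)
  rfl

lemma exists_zip {α β : Type*} (A : Multiset α) (B : Multiset β) (h : A.card = B.card) :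
    ∃ M : Multiset (α × β), M.map Prod.fst = A ∧ M.map Prod.snd = B := by
  induction A using Quotient.inductionOn with | _ a
  induction B using Quotient.inductionOn with | _ b
  have h' : a.length = b.length := h
  refine ⟨(a.zip b : List _), ?_, ?_⟩
  · simp [List.map_fst_zip h'.le]
  · simp [List.map_snd_zip h'.ge]

open MvPolynomial in
noncomputable def segre (m₁ m₂ : ℕ) :
    MvPolynomial (Fin m₁ × Fin m₂) ℝ →ₐ[ℝ] MvPolynomial (Fin m₁ ⊕ Fin m₂) ℝ :=
  aeval (fun q => X (Sum.inl q.1) * X (Sum.inr q.2))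

open MvPolynomial in
lemma segre_prod (m₁ m₂ : ℕ) (M : Multiset (Fin m₁ × Fin m₂)) :
    segre m₁ m₂ (M.map X).prod =
      monomial (Multiset.toFinsupp
        ((M.map Prod.fst).map Sum.inl + (M.map Prod.snd).map Sum.inr)) 1 := by
  rw [← aux_prod, map_multiset_prod, Multiset.map_map]
  simp [segre, Function.comp_def, Multiset.prod_map_mul]

open MvPolynomial in
lemma segre_map (m₁ m₂ n : ℕ) :
    (restrictTotalDegree (Fin m₁ × Fin m₂) ℝ n).map (segre m₁ m₂).toLinearMap =
      Submodule.span ℝ (Set.range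
        (fun t : Idx m₁ m₂ n => monomial (Multiset.toFinsupp (idxM t)) (1:ℝ))) := by
  rw [aux_span_s15, Submodule.map_span]
  congr 1
  ext p
  simp only [Set.mem_image, Set.mem_ofPred_eq, Set.mem_range, exists_exists_and_eq_and,
    AlgHom.toLinearMap_apply, segre_prod]
  constructor
  · rintro ⟨M, hM, rfl⟩
    exact ⟨⟨⟨M.card, by omega⟩, ⟨M.map Prod.fst, by simp⟩, ⟨M.map Prod.snd, by simp⟩⟩, rfl⟩
  · rintro ⟨⟨k, ⟨A, hA⟩, ⟨B, hB⟩⟩, rfl⟩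
    obtain ⟨M, rfl, rfl⟩ := exists_zip A B (hA.trans hB.symm)
    refine ⟨M, ?_, rfl⟩
    have := k.2
    simp at hA
    omega

open MvPolynomial in
lemma segre_finrank (m₁ m₂ n : ℕ) :
    Module.finrank ℝ ((restrictTotalDegree (Fin m₁ × Fin m₂) ℝ n).map (segre m₁ m₂).toLinearMap) =
      Fintype.card (Idx m₁ m₂ n) := by
  rw [segre_map]
  apply finrank_span_eq_card
  have := (basisMonomials (Fin m₁ ⊕ Fin m₂) ℝ).linearIndependent.comp
    (fun t : Idx m₁ m₂ n => Multiset.toFinsupp (idxM t))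
    (Multiset.toFinsupp.injective.comp idxM_inj)
  simpa [Function.comp_def] using this

lemma card_idx (m₁ m₂ n : ℕ) (hm₁ : 1 ≤ m₁) (hm₂ : 1 ≤ m₂) :
    Fintype.card (Idx m₁ m₂ n) = ∑ k ∈ Finset.range (n + 1),
        Nat.choose (k + m₁ - 1) (m₁ - 1) * Nat.choose (k + m₂ - 1) (m₂ - 1) := by
  have key : ∀ m k : ℕ, 1 ≤ m → Fintype.card (Sym (Fin m) k) = (k + m - 1).choose (m - 1) := by
    intro m k hm
    rw [Sym.card_sym_eq_choose, Fintype.card_fin, add_comm m k]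
    apply Nat.choose_symm_of_eq_add
    omega
  rw [Fintype.card_sigma, Finset.sum_range]
  refine Finset.sum_congr rfl fun k _ => ?_
  rw [Fintype.card_prod, key _ _ hm₁, key _ _ hm₂]

open MvPolynomial in
lemma main_aux (m₁ m₂ n : ℕ) (hm₁ : 1 ≤ m₁) (hm₂ : 1 ≤ m₂) :
    HF {A : Fin m₁ × Fin m₂ → ℝ |
          ∃ (x : Fin m₁ → ℝ) (y : Fin m₂ → ℝ), ∀ q : Fin m₁ × Fin m₂, A q = x q.1 * y q.2}
        n =
      ∑ k ∈ Finset.range (n + 1),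
        Nat.choose (k + m₁ - 1) (m₁ - 1) * Nat.choose (k + m₂ - 1) (m₂ - 1) := by
  rw [← card_idx m₁ m₂ n hm₁ hm₂, ← segre_finrank, HF, polySpace]
  set V := {A : Fin m₁ × Fin m₂ → ℝ |
          ∃ (x : Fin m₁ → ℝ) (y : Fin m₂ → ℝ), ∀ q : Fin m₁ × Fin m₂, A q = x q.1 * y q.2}
  let φ : (Fin m₁ ⊕ Fin m₂ → ℝ) → V := fun z =>
    ⟨fun q => z (Sum.inl q.1) * z (Sum.inr q.2), fun i => z (Sum.inl i), fun j => z (Sum.inr j),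
      fun _ => rfl⟩
  have hφ : Function.Surjective φ := by
    rintro ⟨A, x, y, h⟩
    exact ⟨Sum.elim x y, Subtype.ext (funext fun q => (h q).symm)⟩
  let L : (V → ℝ) →ₗ[ℝ] ((Fin m₁ ⊕ Fin m₂ → ℝ) → ℝ) := LinearMap.funLeft ℝ ℝ φ
  have hL : Function.Injective L := LinearMap.funLeft_injective_of_surjective ℝ ℝ φ hφ
  let E : MvPolynomial (Fin m₁ ⊕ Fin m₂) ℝ →ₗ[ℝ] ((Fin m₁ ⊕ Fin m₂ → ℝ) → ℝ) :=
    { toFun := fun p z => eval z p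
      map_add' := by intro p q; funext z; simp
      map_smul' := by intro c p; funext z; simp [smul_eval] }
  have hE : Function.Injective E := fun p q h => MvPolynomial.funext fun z => congrFun h z
  have hcomp : L ∘ₗ restrictEval V = E ∘ₗ (segre m₁ m₂).toLinearMap := by
    refine LinearMap.ext fun p => _root_.funext fun z => ?_
    change eval (φ z : Fin m₁ × Fin m₂ → ℝ) p = eval z (segre m₁ m₂ p)
    induction p using MvPolynomial.induction_on with
    | C a => simp [segre]
    | add p q hp hq => simp only [map_add, hp, hq]
    | mul_X p i hp => 
      simp only [map_mul, hp]
      simp [segre, φ]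
  rw [(Submodule.equivMapOfInjective L hL _).finrank_eq,
    (Submodule.equivMapOfInjective E hE _).finrank_eq, ← Submodule.map_comp, hcomp,
    Submodule.map_comp]

/-- **Hilbert function of the variety of rank-one matrices.** For `m₁, m₂ ≥ 1`, the set
`V = {x yᵀ : x ∈ ℝ^{m₁}, y ∈ ℝ^{m₂}}` of `m₁ × m₂` matrices of rank at most one, viewed
as a subset of `ℝ^{m₁×m₂}` (coordinates indexed by `Fin m₁ × Fin m₂`), has
`HF_V(n) = Σ_{k=0}^{n} C(k+m₁-1, m₁-1)·C(k+m₂-1, m₂-1)`. -/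
theorem stmt_15 (m₁ m₂ n : ℕ) (hm₁ : 1 ≤ m₁) (hm₂ : 1 ≤ m₂) :
    HF {A : Fin m₁ × Fin m₂ → ℝ |
          ∃ (x : Fin m₁ → ℝ) (y : Fin m₂ → ℝ), ∀ q : Fin m₁ × Fin m₂, A q = x q.1 * y q.2}
        n =
      ∑ k ∈ Finset.range (n + 1),
        Nat.choose (k + m₁ - 1) (m₁ - 1) * Nat.choose (k + m₂ - 1) (m₂ - 1) := by
  exact main_aux m₁ m₂ n hm₁ hm₂
end

section
/- Let k ≥ 1, d = 2k, and n ∈ ℕ, and let V ⊂ ℝ^d be the trigonometric moment curve V = {(cos θ, cos 2θ, …, cos kθ, sin θ, sin 2θ, …, sin kθ) : θ ∈ [0, 2π)}. Then HF_V(n) = d·n + 1. -/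
/-- trigonometric basis -/
noncomputable def tb (j : ℤ) : ℝ → ℝ := fun θ =>
  if 0 ≤ j then Real.cos (j * θ) else Real.sin (j * θ)

lemma int_cos (m : ℤ) : ∫ θ in (0:ℝ)..(2 * Real.pi), Real.cos (m * θ) =
    if m = 0 then 2 * Real.pi else 0 := by
  split_ifs with h
  · subst h; simp
  · have hm : (m : ℝ) ≠ 0 := by exact_mod_cast h
    rw [intervalIntegral.integral_comp_mul_left (fun x => Real.cos x) hm]
    have : Real.sin (m * (2 * Real.pi)) = 0 := by
      have := Real.sin_int_mul_pi (2 * m)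
      push_cast at this
      rw [← this]; congr 1; ring
    simp [this]

lemma int_sin (m : ℤ) : ∫ θ in (0:ℝ)..(2 * Real.pi), Real.sin (m * θ) = 0 := by
  by_cases h : m = 0
  · subst h; simp
  · have hm : (m : ℝ) ≠ 0 := by exact_mod_cast h
    rw [intervalIntegral.integral_comp_mul_left (fun x => Real.sin x) hm]
    simp [Real.cos_int_mul_two_pi]

lemma tb_cont (j : ℤ) : Continuous (tb j) := by
  unfold tb
  split_ifs <;> fun_prop

lemma ii_cos (m : ℤ) : IntervalIntegrable (fun θ : ℝ => Real.cos (m * θ)) MeasureTheory.volume 0 (2 * Real.pi) :=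
  Continuous.intervalIntegrable (by fun_prop) _ _
lemma ii_sin (m : ℤ) : IntervalIntegrable (fun θ : ℝ => Real.sin (m * θ)) MeasureTheory.volume 0 (2 * Real.pi) :=
  Continuous.intervalIntegrable (by fun_prop) _ _

lemma cc (a b : ℤ) (θ : ℝ) : Real.cos (a * θ) * Real.cos (b * θ) =
    2⁻¹ * (Real.cos ((a - b : ℤ) * θ) + Real.cos ((a + b : ℤ) * θ)) := by
  push_cast
  rw [sub_mul, add_mul, Real.cos_sub, Real.cos_add]; ring
lemma ss (a b : ℤ) (θ : ℝ) : Real.sin (a * θ) * Real.sin (b * θ) =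
    2⁻¹ * (Real.cos ((a - b : ℤ) * θ) - Real.cos ((a + b : ℤ) * θ)) := by
  push_cast
  rw [sub_mul, add_mul, Real.cos_sub, Real.cos_add]; ring
lemma sc (a b : ℤ) (θ : ℝ) : Real.sin (a * θ) * Real.cos (b * θ) =
    2⁻¹ * (Real.sin ((a - b : ℤ) * θ) + Real.sin ((a + b : ℤ) * θ)) := by
  push_cast
  rw [sub_mul, add_mul, Real.sin_sub, Real.sin_add]; ring
lemma cs (a b : ℤ) (θ : ℝ) : Real.cos (a * θ) * Real.sin (b * θ) =
    2⁻¹ * (Real.sin ((a + b : ℤ) * θ) - Real.sin ((a - b : ℤ) * θ)) := by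
  push_cast
  rw [sub_mul, add_mul, Real.sin_sub, Real.sin_add]; ring

lemma tb_orth (i j : ℤ) (h : i ≠ j) : ∫ θ in (0:ℝ)..(2 * Real.pi), tb i θ * tb j θ = 0 := by
  unfold tb
  have h1 : i - j ≠ 0 := sub_ne_zero.2 h
  split_ifs with hi hj hj
  · simp_rw [cc]
    rw [intervalIntegral.integral_const_mul, intervalIntegral.integral_add (ii_cos _) (ii_cos _),
      int_cos, int_cos, if_neg h1, if_neg (by omega)]
    simp
  · simp_rw [cs]
    rw [intervalIntegral.integral_const_mul, intervalIntegral.integral_sub (ii_sin _) (ii_sin _),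
      int_sin, int_sin]
    simp
  · simp_rw [sc]
    rw [intervalIntegral.integral_const_mul, intervalIntegral.integral_add (ii_sin _) (ii_sin _),
      int_sin, int_sin]
    simp
  · simp_rw [ss]
    rw [intervalIntegral.integral_const_mul, intervalIntegral.integral_sub (ii_cos _) (ii_cos _),
      int_cos, int_cos, if_neg h1, if_neg (by omega)]
    simp

lemma tb_self (j : ℤ) : ∫ θ in (0:ℝ)..(2 * Real.pi), tb j θ * tb j θ ≠ 0 := by
  have := Real.pi_pos
  unfold tb
  split_ifs with hj
  · simp_rw [cc]
    rw [intervalIntegral.integral_const_mul, intervalIntegral.integral_add (ii_cos _) (ii_cos _),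
      int_cos, int_cos, if_pos (by omega)]
    split_ifs <;> positivity
  · simp_rw [ss]
    rw [intervalIntegral.integral_const_mul, intervalIntegral.integral_sub (ii_cos _) (ii_cos _),
      int_cos, int_cos, if_pos (by omega), if_neg (by omega)]
    simp

lemma tb_indep : LinearIndependent ℝ tb := by
  rw [linearIndependent_iff']
  intro s g hg j hj
  have h1 : ∫ θ in (0:ℝ)..(2 * Real.pi), ∑ i ∈ s, g i * (tb i θ * tb j θ) = 0 := by
    have : ∀ θ, ∑ i ∈ s, g i * (tb i θ * tb j θ) = 0 := by
      intro θ
      have := congrFun hg θ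
      simp only [Finset.sum_apply, Pi.smul_apply, smul_eq_mul, Pi.zero_apply] at this
      simp_rw [← mul_assoc]
      rw [← Finset.sum_mul, this, zero_mul]
    simp [this]
  rw [intervalIntegral.integral_finsetSum] at h1
  · simp_rw [intervalIntegral.integral_const_mul] at h1
    rw [Finset.sum_eq_single j] at h1
    · exact (mul_eq_zero.1 h1).resolve_right (tb_self j)
    · intro b _ hb
      rw [tb_orth _ _ hb, mul_zero]
    · intro h; exact absurd hj h
  · intro i _
    exact Continuous.intervalIntegrable
      (continuous_const.mul ((tb_cont i).mul (tb_cont j))) _ _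

/-- span of trig polys of degree at most N -/
noncomputable def TW (N : ℕ) : Submodule ℝ (ℝ → ℝ) :=
  Submodule.span ℝ (Set.range fun j : ↥(Finset.Icc (-(N:ℤ)) N) => tb j)

lemma TW_finrank (N : ℕ) : Module.finrank ℝ (TW N) = 2 * N + 1 := by
  unfold TW
  rw [finrank_span_eq_card]
  · simp only [Fintype.card_coe, Int.card_Icc]; omega
  · exact tb_indep.comp _ Subtype.val_injective

lemma tb_mem (N : ℕ) (j : ℤ) (h : |j| ≤ N) : tb j ∈ TW N := by
  rw [abs_le] at h
  exact Submodule.subset_span ⟨⟨j, Finset.mem_Icc.2 h⟩, rfl⟩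

lemma cos_mem (N : ℕ) (j : ℤ) (h : |j| ≤ N) : (fun θ : ℝ => Real.cos (j * θ)) ∈ TW N := by
  have h2 := tb_mem N |j| (by rwa [abs_abs])
  convert h2 using 1
  funext θ
  simp only [tb, abs_nonneg, if_true]
  rcases abs_choice j with h | h <;> rw [h]
  push_cast; rw [neg_mul, Real.cos_neg]

lemma sin_mem (N : ℕ) (j : ℤ) (h : |j| ≤ N) : (fun θ : ℝ => Real.sin (j * θ)) ∈ TW N := by
  rcases lt_trichotomy j 0 with h0 | h0 | h0
  · have h2 := tb_mem N j h
    convert h2 using 1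
    funext θ
    simp [tb, not_le.2 h0]
  · subst h0
    convert (TW N).zero_mem using 1
    funext θ; simp
  · have h2 := (TW N).neg_mem (tb_mem N (-j) (by rwa [abs_neg]))
    convert h2 using 1
    funext θ
    simp [tb, not_le.2 h0]

lemma TW_mul (M N : ℕ) : TW M * TW N ≤ TW (M + N) := by
  conv_lhs => rw [TW, TW, Submodule.span_mul_span]
  rw [Submodule.span_le]
  rintro _ ⟨_, ⟨⟨a, ha⟩, rfl⟩, _, ⟨⟨b, hb⟩, rfl⟩, rfl⟩
  rw [Finset.mem_Icc] at ha hb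
  have h1 : |a - b| ≤ ((M + N : ℕ) : ℤ) := by rw [abs_le]; push_cast; omega
  have h2 : |a + b| ≤ ((M + N : ℕ) : ℤ) := by rw [abs_le]; push_cast; omega
  have c1 := cos_mem _ _ h1
  have c2 := cos_mem _ _ h2
  have s1 := sin_mem _ _ h1
  have s2 := sin_mem _ _ h2
  simp only [SetLike.mem_coe]
  by_cases ha0 : 0 ≤ a <;> by_cases hb0 : 0 ≤ b
  · convert (TW (M+N)).smul_mem (2⁻¹:ℝ) ((TW (M+N)).add_mem c1 c2) using 1
    funext θ; simp only [tb, ha0, hb0, if_true, Pi.mul_apply]; exact cc a b θ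
  · convert (TW (M+N)).smul_mem (2⁻¹:ℝ) ((TW (M+N)).sub_mem s2 s1) using 1
    funext θ; simp only [tb, ha0, hb0, if_true, if_false, Pi.mul_apply]; exact cs a b θ
  · convert (TW (M+N)).smul_mem (2⁻¹:ℝ) ((TW (M+N)).add_mem s1 s2) using 1
    funext θ; simp only [tb, ha0, hb0, if_true, if_false, Pi.mul_apply]; exact sc a b θ
  · convert (TW (M+N)).smul_mem (2⁻¹:ℝ) ((TW (M+N)).sub_mem c1 c2) using 1
    funext θ; simp only [tb, ha0, hb0, if_false, Pi.mul_apply]; exact ss a b θ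

lemma TW_mono {M N : ℕ} (h : M ≤ N) : TW M ≤ TW N := by
  unfold TW
  rw [Submodule.span_le]
  rintro _ ⟨⟨a, ha⟩, rfl⟩
  rw [Finset.mem_Icc] at ha
  exact tb_mem N a (by rw [abs_le]; omega)

lemma one_mem_TW (N : ℕ) : (1 : ℝ → ℝ) ∈ TW N := by
  convert cos_mem N 0 (by simp) using 1
  funext θ; simp

lemma pow_mem_TW {k : ℕ} {f : ℝ → ℝ} (hf : f ∈ TW k) (e : ℕ) : f ^ e ∈ TW (k * e) := by
  induction e with
  | zero => simpa using one_mem_TW 0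
  | succ e ih => rw [pow_succ, Nat.mul_succ]; exact TW_mul _ _ (Submodule.mul_mem_mul ih hf)

lemma prod_mem_TW {ι : Type} {k : ℕ} (f : ι → ℝ → ℝ) (hf : ∀ i, f i ∈ TW k) (e : ι → ℕ)
    (s : Finset ι) : ∏ i ∈ s, f i ^ e i ∈ TW (k * ∑ i ∈ s, e i) := by
  classical
  induction s using Finset.induction_on with
  | empty => simpa using one_mem_TW 0
  | insert a s ha ih =>
    rw [Finset.prod_insert ha, Finset.sum_insert ha, mul_add]
    exact TW_mul _ _ (Submodule.mul_mem_mul (pow_mem_TW (hf a) _) ih)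

/-- the curve -/
noncomputable def GC (k : ℕ) (θ : ℝ) (i : Fin (2 * k)) : ℝ :=
  if (i : ℕ) < k then Real.cos (((i : ℕ) + 1) * θ)
              else Real.sin ((((i : ℕ) - k) + 1) * θ)

lemma GC_mem (k : ℕ) (i : Fin (2 * k)) : (fun θ => GC k θ i) ∈ TW k := by
  unfold GC
  by_cases h : (i : ℕ) < k
  · convert cos_mem k ((i : ℕ) + 1 : ℤ) (by rw [abs_le]; omega) using 1
    funext θ; simp [h]
  · convert sin_mem k ((i : ℕ) - k + 1 : ℤ) (by rw [abs_le]; omega) using 1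
    funext θ; simp [h]

/-- pullback of polynomials to the parameter line -/
noncomputable def EV (k : ℕ) : MvPolynomial (Fin (2 * k)) ℝ →ₗ[ℝ] (ℝ → ℝ) where
  toFun p := fun θ => MvPolynomial.eval (GC k θ) p
  map_add' p q := by funext x; simp
  map_smul' c p := by funext x; simp [MvPolynomial.smul_eval]

lemma EV_mul (k : ℕ) (p q) : EV k (p * q) = EV k p * EV k q := by
  funext θ; simp [EV]

/-- image -/
noncomputable def PP (k n : ℕ) : Submodule ℝ (ℝ → ℝ) :=
  (MvPolynomial.restrictTotalDegree (Fin (2 * k)) ℝ n).map (EV k)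

lemma PP_le (k n : ℕ) : PP k n ≤ TW (k * n) := by
  rintro _ ⟨p, hp, rfl⟩
  rw [SetLike.mem_coe, MvPolynomial.mem_restrictTotalDegree] at hp
  rw [p.as_sum, map_sum]
  refine Submodule.sum_mem _ fun m hm => ?_
  have h1 : ∑ i, m i ≤ n := by
    have := MvPolynomial.le_totalDegree hm
    rw [Finsupp.sum_fintype _ _ (by simp)] at this
    exact this.trans hp
  have h2 := TW_mono (Nat.mul_le_mul_left k h1)
    (prod_mem_TW (fun i θ => GC k θ i) (GC_mem k) m Finset.univ)
  convert (TW (k * n)).smul_mem (p.coeff m) h2 using 1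
  funext θ
  simp [EV, MvPolynomial.eval_monomial, Finsupp.prod_fintype]

lemma PP_mul (k m n : ℕ) {f g : ℝ → ℝ} (hf : f ∈ PP k m) (hg : g ∈ PP k n) :
    f * g ∈ PP k (m + n) := by
  obtain ⟨p, hp, rfl⟩ := hf
  obtain ⟨q, hq, rfl⟩ := hg
  rw [SetLike.mem_coe, MvPolynomial.mem_restrictTotalDegree] at hp hq
  refine ⟨p * q, ?_, EV_mul k p q⟩
  rw [SetLike.mem_coe, MvPolynomial.mem_restrictTotalDegree]
  exact (MvPolynomial.totalDegree_mul _ _).trans (add_le_add hp hq)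

lemma PP_one (k n : ℕ) : (1 : ℝ → ℝ) ∈ PP k n := by
  refine ⟨1, ?_, ?_⟩
  · rw [SetLike.mem_coe, MvPolynomial.mem_restrictTotalDegree]; simp
  · funext θ; simp [EV]

lemma PP_X (k : ℕ) (i : Fin (2 * k)) : (fun θ => GC k θ i) ∈ PP k 1 := by
  refine ⟨MvPolynomial.X i, ?_, ?_⟩
  · rw [SetLike.mem_coe, MvPolynomial.mem_restrictTotalDegree]; simp
  · funext θ; simp [EV]

lemma PP_base_nat (k : ℕ) (j : ℕ) (h : j ≤ k) :
    (fun θ : ℝ => Real.cos (j * θ)) ∈ PP k 1 ∧ (fun θ : ℝ => Real.sin (j * θ)) ∈ PP k 1 := by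
  rcases j with _ | j
  · constructor
    · convert PP_one k 1 using 1
      funext θ; simp
    · convert (PP k 1).zero_mem using 1
      funext θ; simp
  · constructor
    · convert PP_X k ⟨j, by omega⟩ using 1
      funext θ
      simp only [GC]
      rw [if_pos (by omega)]; push_cast; rfl
    · convert PP_X k ⟨k + j, by omega⟩ using 1
      funext θ
      simp only [GC]
      rw [if_neg (by omega)]; push_cast; congr 1; ring

lemma PP_nat (k n : ℕ) (j : ℕ) (h : j ≤ k * n) :
    (fun θ : ℝ => Real.cos (j * θ)) ∈ PP k n ∧ (fun θ : ℝ => Real.sin (j * θ)) ∈ PP k n := by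
  induction n generalizing j with
  | zero =>
    have : j = 0 := by simpa using h
    subst this
    constructor
    · convert PP_one k 0 using 1
      funext θ; simp
    · convert (PP k 0).zero_mem using 1
      funext θ; simp
  | succ n ih =>
    rw [Nat.mul_succ] at h
    obtain ⟨a, b, ha, hb, rfl⟩ : ∃ a b, a ≤ k * n ∧ b ≤ k ∧ j = a + b :=
      ⟨min j (k * n), j - min j (k * n), by omega, by omega, by omega⟩
    obtain ⟨c1, s1⟩ := ih a ha
    obtain ⟨c2, s2⟩ := PP_base_nat k b hb
    constructor
    · convert (PP k (n+1)).sub_mem (PP_mul _ _ _ c1 c2) (PP_mul _ _ _ s1 s2) using 1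
      funext θ
      simp [add_mul, Real.cos_add]
    · convert (PP k (n+1)).add_mem (PP_mul _ _ _ s1 c2) (PP_mul _ _ _ c1 s2) using 1
      funext θ
      simp [add_mul, Real.sin_add]

lemma PP_eq (k n : ℕ) : PP k n = TW (k * n) := by
  refine le_antisymm (PP_le k n) ?_
  unfold TW
  rw [Submodule.span_le]
  rintro _ ⟨⟨a, ha⟩, rfl⟩
  rw [Finset.mem_Icc] at ha
  obtain ⟨c, s⟩ := PP_nat k n a.natAbs (by omega)
  rw [SetLike.mem_coe]
  by_cases h : 0 ≤ a
  · convert c using 1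
    funext θ
    simp [tb, h, Nat.cast_natAbs, abs_of_nonneg]
  · convert (PP k n).neg_mem s using 1
    funext θ
    simp [tb, h, Nat.cast_natAbs, abs_of_neg (not_le.1 h)]

lemma GC_periodic (k : ℕ) (θ : ℝ) (m : ℤ) : GC k (θ + m * (2 * Real.pi)) = GC k θ := by
  funext i
  unfold GC
  split_ifs
  · rw [← Real.cos_add_int_mul_two_pi (((i : ℕ) + 1) * θ) (((i : ℕ) + 1) * m)]
    congr 1; push_cast; ring
  · rw [← Real.sin_add_int_mul_two_pi (((i : ℕ) - k + 1) * θ) (((i : ℕ) - k + 1) * m)]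
    congr 1; push_cast; ring

theorem stmt_16 (k n : ℕ) (hk : 1 ≤ k) :
    HF {x : Fin (2 * k) → ℝ | ∃ θ ∈ Set.Ico (0 : ℝ) (2 * Real.pi),
          ∀ i : Fin (2 * k),
            x i = if (i : ℕ) < k then Real.cos (((i : ℕ) + 1) * θ)
              else Real.sin ((((i : ℕ) - k) + 1) * θ)} n =
      2 * k * n + 1 := by
  set V : Set (Fin (2 * k) → ℝ) := {x : Fin (2 * k) → ℝ | ∃ θ ∈ Set.Ico (0 : ℝ) (2 * Real.pi),
          ∀ i : Fin (2 * k),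
            x i = if (i : ℕ) < k then Real.cos (((i : ℕ) + 1) * θ)
              else Real.sin ((((i : ℕ) - k) + 1) * θ)} with hV
  have hmem : ∀ θ, GC k θ ∈ V := by
    intro θ
    refine ⟨toIcoMod Real.two_pi_pos 0 θ, by simpa using toIcoMod_mem_Ico Real.two_pi_pos 0 θ, ?_⟩
    intro i
    have h := toIcoMod_add_toIcoDiv_zsmul Real.two_pi_pos 0 θ
    rw [zsmul_eq_mul] at h
    rw [← h, GC_periodic, h]
    rfl
  let γ : ℝ → V := fun θ => ⟨GC k θ, hmem θ⟩
  have hγ : Function.Surjective γ := by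
    rintro ⟨x, θ, hθ, hx⟩
    exact ⟨θ, Subtype.ext (funext fun i => (hx i).symm)⟩
  have hinj : Function.Injective (LinearMap.funLeft ℝ ℝ γ) :=
    LinearMap.funLeft_injective_of_surjective ℝ ℝ γ hγ
  have hmap : (polySpace V n).map (LinearMap.funLeft ℝ ℝ γ) = TW (k * n) := by
    rw [← PP_eq, PP, polySpace, ← Submodule.map_comp]
    rfl
  have := (Submodule.equivMapOfInjective _ hinj (polySpace V n)).finrank_eq
  unfold HF
  rw [this, hmap, TW_finrank, mul_assoc]
end

section
/- Let n ∈ ℕ and let V = SO(3) = {A ∈ ℝ^{3×3} : AᵀA = I, det A = 1}, regarded as a subset of ℝ^{3×3} ≅ ℝ⁹ (coordinates given by the 9 matrix entries). Then HF_V(n) = (2n+3)(2n+1)(n+1)/3. -/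
open MvPolynomial


theorem surj_aux (a b c d e f g h i : ℝ)
  (r1 : a*a+d*d+g*g=1) (r2 : b*b+e*e+h*h=1) (r3 : c*c+f*f+i*i=1)
  (r4 : a*b+d*e+g*h=0) (r5 : a*c+d*f+g*i=0) (r6 : b*c+e*f+h*i=0)
  (s1 : a*a+b*b+c*c=1) (s2 : d*d+e*e+f*f=1) (_s3 : g*g+h*h+i*i=1)
  (s4 : a*d+b*e+c*f=0) (s5 : a*g+b*h+c*i=0) (s6 : d*g+e*h+f*i=0)
  (c1 : e*i-f*h=a) (c2 : f*g-d*i=b) (c3 : d*h-e*g=c)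
  (c4 : c*h-b*i=d) (c5 : a*i-c*g=e) (c6 : b*g-a*h=f)
  (c7 : b*f-c*e=g) (c8 : c*d-a*f=h) (c9 : a*e-b*d=i) :
  ∃ w x y z : ℝ, w^2+x^2+y^2+z^2=1 ∧ a = w^2+x^2-y^2-z^2 ∧ b = 2*(x*y-w*z) ∧ c = 2*(x*z+w*y)
   ∧ d = 2*(x*y+w*z) ∧ e = w^2-x^2+y^2-z^2 ∧ f = 2*(y*z-w*x)
   ∧ g = 2*(x*z-w*y) ∧ h = 2*(y*z+w*x) ∧ i = w^2-x^2-y^2+z^2 := by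
  have key : ∀ (t p q r s : ℝ), 0 < t → p^2+q^2+r^2+s^2=4*t → 
      p^2+q^2-r^2-s^2=4*t*a → 2*(q*r-p*s)=4*t*b → 2*(q*s+p*r)=4*t*c →
      2*(q*r+p*s)=4*t*d → p^2-q^2+r^2-s^2=4*t*e → 2*(r*s-p*q)=4*t*f →
      2*(q*s-p*r)=4*t*g → 2*(r*s+p*q)=4*t*h → p^2-q^2-r^2+s^2=4*t*i → 
      ∃ w x y z : ℝ, w^2+x^2+y^2+z^2=1 ∧ a = w^2+x^2-y^2-z^2 ∧ b = 2*(x*y-w*z) ∧ c = 2*(x*z+w*y)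
   ∧ d = 2*(x*y+w*z) ∧ e = w^2-x^2+y^2-z^2 ∧ f = 2*(y*z-w*x)
   ∧ g = 2*(x*z-w*y) ∧ h = 2*(y*z+w*x) ∧ i = w^2-x^2-y^2+z^2 := by
    intro t p q r s ht h0 h1 h2 h3 h4 h5 h6 h7 h8 h9
    obtain ⟨u, hu⟩ : ∃ u : ℝ, u^2 * (4*t) = 1 := by
      refine ⟨(Real.sqrt (4*t))⁻¹, ?_⟩
      rw [inv_pow, Real.sq_sqrt (by positivity)]
      field_simp
    refine ⟨u*p, u*q, u*r, u*s, ?_, ?_, ?_, ?_, ?_, ?_, ?_, ?_, ?_, ?_⟩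
    · linear_combination u^2*h0 + hu
    · linear_combination -u^2*h1 - a*hu
    · linear_combination -u^2*h2 - b*hu
    · linear_combination -u^2*h3 - c*hu
    · linear_combination -u^2*h4 - d*hu
    · linear_combination -u^2*h5 - e*hu
    · linear_combination -u^2*h6 - f*hu
    · linear_combination -u^2*h7 - g*hu
    · linear_combination -u^2*h8 - h*hu
    · linear_combination -u^2*h9 - i*hu
  have cases : 0 < 1+a+e+i ∨ 0 < 1+a-e-i ∨ 0 < 1-a+e-i ∨ 0 < 1-a-e+i := by
    by_contra! hh
    linarith [hh.1, hh.2.1, hh.2.2.1, hh.2.2.2]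
  rcases cases with ht | ht | ht | ht
  · apply key _ (1+a+e+i) (h-f) (c-g) (d-b) ht <;> linarith
  · apply key _ (h-f) (1+a-e-i) (b+d) (c+g) ht <;> linarith
  · apply key _ (c-g) (b+d) (1-a+e-i) (f+h) ht <;> linarith
  · apply key _ (d-b) (c+g) (f+h) (1-a-e+i) ht <;> linarith

noncomputable def QQ : Fin 3 × Fin 3 → MvPolynomial (Fin 4) ℝ
  | (0,0) => X 0^2+X 1^2-X 2^2-X 3^2
  | (0,1) => C 2*(X 1*X 2-X 0*X 3)
  | (0,2) => C 2*(X 1*X 3+X 0*X 2)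
  | (1,0) => C 2*(X 1*X 2+X 0*X 3)
  | (1,1) => X 0^2-X 1^2+X 2^2-X 3^2
  | (1,2) => C 2*(X 2*X 3-X 0*X 1)
  | (2,0) => C 2*(X 1*X 3-X 0*X 2)
  | (2,1) => C 2*(X 2*X 3+X 0*X 1)
  | (2,2) => X 0^2-X 1^2-X 2^2+X 3^2

noncomputable def RR : MvPolynomial (Fin 4) ℝ := X 0^2+X 1^2+X 2^2+X 3^2

def S3 (q : Fin 4 → ℝ) : Prop := q 0^2+q 1^2+q 2^2+q 3^2 = 1

noncomputable def phi (q : Fin 4 → ℝ) : Fin 3 × Fin 3 → ℝ := fun p => eval q (QQ p)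

theorem QQ_hom (p) : (QQ p).IsHomogeneous 2 := by
  have hx : ∀ i : Fin 4, (X i ^ 2 : MvPolynomial (Fin 4) ℝ).IsHomogeneous 2 := fun i => by
    simpa using (isHomogeneous_X ℝ i).pow 2
  have hxy : ∀ i j : Fin 4, (X i * X j : MvPolynomial (Fin 4) ℝ).IsHomogeneous 2 := fun i j =>
    (isHomogeneous_X ℝ i).mul (isHomogeneous_X ℝ j)
  have h2 : ∀ f : MvPolynomial (Fin 4) ℝ, f.IsHomogeneous 2 → (C 2 * f).IsHomogeneous 2 :=
    fun f hf => by simpa using (isHomogeneous_C (Fin 4) (2:ℝ)).mul hf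
  exact match p with
  | (0,0) => (((hx 0).add (hx 1)).sub (hx 2)).sub (hx 3)
  | (0,1) => h2 _ ((hxy _ _).sub (hxy _ _))
  | (0,2) => h2 _ ((hxy _ _).add (hxy _ _))
  | (1,0) => h2 _ ((hxy _ _).add (hxy _ _))
  | (1,1) => (((hx 0).sub (hx 1)).add (hx 2)).sub (hx 3)
  | (1,2) => h2 _ ((hxy _ _).sub (hxy _ _))
  | (2,0) => h2 _ ((hxy _ _).sub (hxy _ _))
  | (2,1) => h2 _ ((hxy _ _).add (hxy _ _))
  | (2,2) => (((hx 0).sub (hx 1)).sub (hx 2)).add (hx 3)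

theorem RR_hom : RR.IsHomogeneous 2 := by
  have hx : ∀ i : Fin 4, (X i ^ 2 : MvPolynomial (Fin 4) ℝ).IsHomogeneous 2 := fun i => by
    simpa using (isHomogeneous_X ℝ i).pow 2
  exact (((hx 0).add (hx 1)).add (hx 2)).add (hx 3)

theorem NN_key (k l : Fin 4) (e : ℝ) (m00 m01 m02 m10 m11 m12 m20 m21 m22 : ℝ)
      (h : ∀ q : Fin 4 → ℝ, q 0^2+q 1^2+q 2^2+q 3^2 = 1 → e +
      (m00 * (q 0^2+q 1^2-q 2^2-q 3^2) + m01 * (2*(q 1*q 2-q 0*q 3)) + m02 * (2*(q 1*q 3+q 0*q 2))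
      + m10 * (2*(q 1*q 2+q 0*q 3)) + m11 * (q 0^2-q 1^2+q 2^2-q 3^2) + m12 * (2*(q 2*q 3-q 0*q 1))
      + m20 * (2*(q 1*q 3-q 0*q 2)) + m21 * (2*(q 2*q 3+q 0*q 1)) + m22 * (q 0^2-q 1^2-q 2^2+q 3^2))
        = q k * q l) :
    ∃ f : MvPolynomial (Fin 3 × Fin 3) ℝ, f.totalDegree ≤ 1 ∧
        ∀ q, S3 q → eval (phi q) f = q k * q l := by
  have hd : ∀ (c : ℝ) (p : Fin 3 × Fin 3), (C c * X p : MvPolynomial (Fin 3 × Fin 3) ℝ).totalDegree ≤ 1 := by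
    intro c p
    refine (totalDegree_mul _ _).trans ?_
    simp
  have ha : ∀ f g : MvPolynomial (Fin 3 × Fin 3) ℝ, f.totalDegree ≤ 1 → g.totalDegree ≤ 1 →
      (f + g).totalDegree ≤ 1 := fun f g hf hg => (totalDegree_add _ _).trans (max_le hf hg)
  refine ⟨C e + (C m00 * X (0,0) + C m01 * X (0,1) + C m02 * X (0,2) + C m10 * X (1,0) +
    C m11 * X (1,1) + C m12 * X (1,2) + C m20 * X (2,0) + C m21 * X (2,1) + C m22 * X (2,2)),
    ?_, fun q hq => ?_⟩
  · refine ha _ _ (by simp) ?_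
    iterate 8 refine ha _ _ ?_ (hd _ _)
    exact hd _ _
  · rw [← h q hq]; simp [phi, QQ]

theorem NN_ex (k l : Fin 4) : ∃ f : MvPolynomial (Fin 3 × Fin 3) ℝ, f.totalDegree ≤ 1 ∧
    ∀ q, S3 q → eval (phi q) f = q k * q l :=
  match k, l with
  | 0, 0 => NN_key 0 0 (1/4) (1/4) 0 0 0 (1/4) 0 0 0 (1/4) fun q hq => by linarith
  | 0, 1 => NN_key 0 1 0 0 0 0 0 0 (-1/4) 0 (1/4) 0 fun q hq => by linarith
  | 0, 2 => NN_key 0 2 0 0 0 (1/4) 0 0 0 (-1/4) 0 0 fun q hq => by linarith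
  | 0, 3 => NN_key 0 3 0 0 (-1/4) 0 (1/4) 0 0 0 0 0 fun q hq => by linarith
  | 1, 0 => NN_key 1 0 0 0 0 0 0 0 (-1/4) 0 (1/4) 0 fun q hq => by linarith
  | 1, 1 => NN_key 1 1 (1/4) (1/4) 0 0 0 (-1/4) 0 0 0 (-1/4) fun q hq => by linarith
  | 1, 2 => NN_key 1 2 0 0 (1/4) 0 (1/4) 0 0 0 0 0 fun q hq => by linarith
  | 1, 3 => NN_key 1 3 0 0 0 (1/4) 0 0 0 (1/4) 0 0 fun q hq => by linarith
  | 2, 0 => NN_key 2 0 0 0 0 (1/4) 0 0 0 (-1/4) 0 0 fun q hq => by linarith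
  | 2, 1 => NN_key 2 1 0 0 (1/4) 0 (1/4) 0 0 0 0 0 fun q hq => by linarith
  | 2, 2 => NN_key 2 2 (1/4) (-1/4) 0 0 0 (1/4) 0 0 0 (-1/4) fun q hq => by linarith
  | 2, 3 => NN_key 2 3 0 0 0 0 0 0 (1/4) 0 (1/4) 0 fun q hq => by linarith
  | 3, 0 => NN_key 3 0 0 0 (-1/4) 0 (1/4) 0 0 0 0 0 fun q hq => by linarith
  | 3, 1 => NN_key 3 1 0 0 0 (1/4) 0 0 0 (1/4) 0 0 fun q hq => by linarith
  | 3, 2 => NN_key 3 2 0 0 0 0 0 0 (1/4) 0 (1/4) 0 fun q hq => by linarith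
  | 3, 3 => NN_key 3 3 (1/4) (-1/4) 0 0 0 (-1/4) 0 0 0 (1/4) fun q hq => by linarith

theorem pull_fin (m : Fin 4 →₀ ℕ) (k : ℕ) (h : m.degree = k + 1) :
    ∃ i m', m'.degree = k ∧ m = Finsupp.single i 1 + m' := by
  have : m ≠ 0 := by rintro rfl; simp at h
  obtain ⟨i, hi⟩ := Finsupp.ne_iff.1 this
  have hle : Finsupp.single i 1 ≤ m := by
    rw [Finsupp.single_le_iff]; simp at hi; omega
  refine ⟨i, m - Finsupp.single i 1, ?_, (add_tsub_cancel_of_le hle).symm⟩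
  have := congrArg Finsupp.degree (add_tsub_cancel_of_le hle)
  rw [map_add, Finsupp.degree_single] at this
  omega

theorem mon_ex (n : ℕ) : ∀ m : Fin 4 →₀ ℕ, m.degree = 2 * n →
    ∃ f : MvPolynomial (Fin 3 × Fin 3) ℝ, f.totalDegree ≤ n ∧
      ∀ q, S3 q → eval (phi q) f = eval q (monomial m 1) := by
  induction n with
  | zero =>
    intro m hm
    have : m = 0 := (Finsupp.degree_eq_zero_iff m).1 (by simpa using hm)
    subst this
    exact ⟨1, by simp, by simp⟩
  | succ n ih =>
    intro m hm
    obtain ⟨i, m', h', rfl⟩ := pull_fin m (2*n+1) (by omega)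
    obtain ⟨j, m'', h'', rfl⟩ := pull_fin m' (2*n) (by omega)
    obtain ⟨f, hf, hf'⟩ := ih m'' h''
    obtain ⟨g, hg, hg'⟩ := NN_ex i j
    refine ⟨g * f, (totalDegree_mul _ _).trans (by omega), fun q hq => ?_⟩
    have e : ∀ (i : Fin 4) (m : Fin 4 →₀ ℕ),
      (monomial (Finsupp.single i 1 + m) (1:ℝ)) = X i * monomial m 1 := by
      intro i m; simp [X, monomial_mul]
    rw [e, e, map_mul, map_mul, map_mul, hf' q hq, hg' q hq, eval_X, eval_X, mul_assoc]

theorem hom_ex (n : ℕ) (p : MvPolynomial (Fin 4) ℝ) (hp : p.IsHomogeneous (2*n)) :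
    ∃ f : MvPolynomial (Fin 3 × Fin 3) ℝ, f.totalDegree ≤ n ∧
      ∀ q, S3 q → eval (phi q) f = eval q p := by
  have := mon_ex n
  choose! F hF hF' using this
  refine ⟨∑ m ∈ p.support, C (p.coeff m) * F m, ?_, fun q hq => ?_⟩
  · refine totalDegree_finsetSum_le fun m hm => ?_
    refine (totalDegree_mul _ _).trans ?_
    have := hF m (by rw [Finsupp.degree_eq_weight_one]; exact hp (mem_support_iff.1 hm))
    simpa using this
  · conv_rhs => rw [p.as_sum]
    rw [map_sum, map_sum]
    refine Finset.sum_congr rfl fun m hm => ?_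
    rw [map_mul, hF' m (by rw [Finsupp.degree_eq_weight_one]; exact hp (mem_support_iff.1 hm)) q hq, eval_C, eval_monomial, eval_monomial, one_mul]

theorem back_ex (n : ℕ) (f : MvPolynomial (Fin 3 × Fin 3) ℝ) (hf : f.totalDegree ≤ n) :
    ∃ p : MvPolynomial (Fin 4) ℝ, p.IsHomogeneous (2*n) ∧
      ∀ q, S3 q → eval q p = eval (phi q) f := by
  refine ⟨∑ m ∈ f.support, C (f.coeff m) * (∏ i, QQ i ^ m i) * RR ^ (n - ∑ i, m i), ?_, fun q hq => ?_⟩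
  · refine IsHomogeneous.sum _ _ _ fun m hm => ?_
    have h1 : ∑ i, m i ≤ n := by
      refine le_trans ?_ hf
      have := le_totalDegree hm
      rwa [Finsupp.sum_fintype _ _ (by simp)] at this
    have h2 : (∏ i, QQ i ^ m i).IsHomogeneous (∑ i, 2 * m i) :=
      IsHomogeneous.prod _ _ _ fun i _ => (QQ_hom i).pow _
    have h3 := ((isHomogeneous_C (Fin 4) (f.coeff m)).mul h2).mul (RR_hom.pow (n - ∑ i, m i))
    convert h3 using 1
    rw [← Finset.mul_sum]; omega
  · have hR : eval q RR = 1 := by simpa [RR, S3] using hq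
    rw [eval_eq' _ f, map_sum]
    refine Finset.sum_congr rfl fun m hm => ?_
    simp [hR, phi]

theorem hom_zero (n : ℕ) (p : MvPolynomial (Fin 4) ℝ) (hp : p.IsHomogeneous (2*n))
    (h : ∀ q, S3 q → eval q p = 0) : p = 0 := by
  have main : ∀ q : Fin 4 → ℝ, q ≠ 0 → eval q p = 0 := by
    intro q hq
    have hpos : 0 < q 0^2+q 1^2+q 2^2+q 3^2 := by
      by_contra hc
      apply hq
      funext i
      have : q i ^ 2 ≤ 0 := by
        fin_cases i <;> simp <;> nlinarith [sq_nonneg (q 0), sq_nonneg (q 1), sq_nonneg (q 2), sq_nonneg (q 3)]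
      simpa using le_antisymm this (sq_nonneg _)
    obtain ⟨u, hu⟩ : ∃ u : ℝ, u^2 * (q 0^2+q 1^2+q 2^2+q 3^2) = 1 := by
      refine ⟨(Real.sqrt (q 0^2+q 1^2+q 2^2+q 3^2))⁻¹, ?_⟩
      rw [inv_pow, Real.sq_sqrt hpos.le]
      exact inv_mul_cancel₀ hpos.ne'
    have h1 := h (u • q) (by simp only [S3, Pi.smul_apply, smul_eq_mul]; linear_combination hu)
    have h2 : eval (u • q) p = u ^ (2*n) * eval q p := by
      rw [eval_eq', eval_eq', Finset.mul_sum]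
      refine Finset.sum_congr rfl fun m hm => ?_
      have hd : ∑ i, m i = 2 * n := by
        have : m.degree = 2 * n := by
          rw [Finsupp.degree_eq_weight_one]; exact hp (mem_support_iff.1 hm)
        rw [Finsupp.degree_eq_sum] at this
        exact this
      simp only [Pi.smul_apply, smul_eq_mul, mul_pow, Finset.prod_mul_distrib, Finset.prod_pow_eq_pow_sum, hd]
      ring
    rw [h2] at h1
    have : u ≠ 0 := by rintro rfl; simp at hu
    simpa [this] using h1
  have : p * X 0 = 0 := by
    refine funext fun q => ?_
    by_cases hq : q = 0
    · simp [hq]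
    · simp [main q hq]
  simpa using this

theorem dim_hom (n : ℕ) : Module.finrank ℝ (homogeneousSubmodule (Fin 4) ℝ n) = (n+3).choose 3 := by
  rw [homogeneousSubmodule_eq_finsupp_supported]
  rw [(AddMonoidAlgebra.supportedEquivFinsupp _).finrank_eq]
  have : {d : Fin 4 →₀ ℕ | d.degree = n} = ↑(Finset.finsuppAntidiag (Finset.univ : Finset (Fin 4)) n) := by
    ext d; simp [Finsupp.degree_eq_sum]
  rw [this, Module.finrank_finsupp_self]
  simp [Finset.card_finsuppAntidiag_nat_eq_choose]
  rw [add_comm 3 n, ← Nat.choose_symm (by omega)]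
  simp

open Matrix in
theorem phi_mem (q : Fin 4 → ℝ) (hq : S3 q) : phi q ∈ {A : Fin 3 × Fin 3 → ℝ |
          (Matrix.of fun i j => A (i, j) : Matrix (Fin 3) (Fin 3) ℝ)ᵀ *
              (Matrix.of fun i j => A (i, j)) = 1 ∧
          (Matrix.of fun i j => A (i, j) : Matrix (Fin 3) (Fin 3) ℝ).det = 1} := by
  simp only [S3] at hq
  have hq2 : (q 0^2+q 1^2+q 2^2+q 3^2)^2 = 1 := by rw [hq]; norm_num
  have hq3 : (q 0^2+q 1^2+q 2^2+q 3^2)^3 = 1 := by rw [hq]; norm_num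
  constructor
  · ext i j
    rw [Matrix.mul_apply, Fin.sum_univ_three]
    fin_cases i <;> fin_cases j <;> simp [phi, QQ] <;> first | linear_combination hq2 | ring
  · rw [Matrix.det_fin_three]
    simp [phi, QQ]
    linear_combination hq3

open Matrix in
theorem phi_surj (A : Fin 3 × Fin 3 → ℝ) (hA : A ∈ {A : Fin 3 × Fin 3 → ℝ |
          (Matrix.of fun i j => A (i, j) : Matrix (Fin 3) (Fin 3) ℝ)ᵀ *
              (Matrix.of fun i j => A (i, j)) = 1 ∧
          (Matrix.of fun i j => A (i, j) : Matrix (Fin 3) (Fin 3) ℝ).det = 1}) : ∃ q, S3 q ∧ phi q = A := by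
  obtain ⟨h1, h2⟩ := hA
  have h3 := mul_eq_one_comm.1 h1
  have h4 : Matrix.adjugate (Matrix.of fun i j => A (i, j) : Matrix (Fin 3) (Fin 3) ℝ) =
      (Matrix.of fun i j => A (i, j) : Matrix (Fin 3) (Fin 3) ℝ)ᵀ := by
    have h5 := Matrix.mul_adjugate (Matrix.of fun i j => A (i, j) : Matrix (Fin 3) (Fin 3) ℝ)
    rw [h2, one_smul] at h5
    rw [← one_mul (Matrix.adjugate _), ← h1, Matrix.mul_assoc, h5, Matrix.mul_one]
  have e1 := fun i j => congrFun (congrFun h1 i) j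
  have e3 := fun i j => congrFun (congrFun h3 i) j
  have e4 := fun i j => congrFun (congrFun h4 i) j
  rw [Matrix.adjugate_fin_three] at h4
  simp only [Matrix.mul_apply, Fin.sum_univ_three, Matrix.transpose_apply, Matrix.of_apply] at e1 e3
  simp only [Matrix.adjugate_fin_three, Matrix.transpose_apply, Matrix.of_apply] at e4
  obtain ⟨w, x, y, z, h0, k1, k2, k3, k4, k5, k6, k7, k8, k9⟩ := surj_aux (A (0,0)) (A (0,1)) (A (0,2))
    (A (1,0)) (A (1,1)) (A (1,2)) (A (2,0)) (A (2,1)) (A (2,2))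
    (by simpa using e1 0 0) (by simpa using e1 1 1) (by simpa using e1 2 2)
    (by simpa using e1 0 1) (by simpa using e1 0 2) (by simpa using e1 1 2)
    (by simpa using e3 0 0) (by simpa using e3 1 1) (by simpa using e3 2 2)
    (by simpa using e3 0 1) (by simpa using e3 0 2) (by simpa using e3 1 2)
    (by have := e4 0 0; simp at this; linarith) (by have := e4 1 0; simp at this; linarith)
    (by have := e4 2 0; simp at this; linarith)
    (by have := e4 0 1; simp at this; linarith) (by have := e4 1 1; simp at this; linarith)
    (by have := e4 2 1; simp at this; linarith)
    (by have := e4 0 2; simp at this; linarith) (by have := e4 1 2; simp at this; linarith)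
    (by have := e4 2 2; simp at this; linarith)
  refine ⟨![w, x, y, z], by simpa [S3] using h0, ?_⟩
  have hall : ∀ p, phi ![w, x, y, z] p = A p := fun p => match p with
    | (0,0) => by rw [k1]; simp [phi, QQ]
    | (0,1) => by rw [k2]; simp [phi, QQ]
    | (0,2) => by rw [k3]; simp [phi, QQ]
    | (1,0) => by rw [k4]; simp [phi, QQ]
    | (1,1) => by rw [k5]; simp [phi, QQ]
    | (1,2) => by rw [k6]; simp [phi, QQ]
    | (2,0) => by rw [k7]; simp [phi, QQ]
    | (2,1) => by rw [k8]; simp [phi, QQ]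
    | (2,2) => by rw [k9]; simp [phi, QQ]
  exact _root_.funext hall

open Matrix in
/-- **Hilbert function of `SO(3)`.** The special orthogonal group
`SO(3) = {A ∈ ℝ^{3×3} : AᵀA = I, det A = 1}`, viewed as a subset of `ℝ⁹` (coordinates
indexed by `Fin 3 × Fin 3`), has `HF_V(n) = (2n+3)(2n+1)(n+1)/3`. -/
theorem stmt_17 (n : ℕ) :
    HF {A : Fin 3 × Fin 3 → ℝ |
          (Matrix.of fun i j => A (i, j) : Matrix (Fin 3) (Fin 3) ℝ)ᵀ *
              (Matrix.of fun i j => A (i, j)) = 1 ∧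
          (Matrix.of fun i j => A (i, j) : Matrix (Fin 3) (Fin 3) ℝ).det = 1} n =
      (2 * n + 3) * (2 * n + 1) * (n + 1) / 3 := by
  have hmem := phi_mem
  have hsurj := phi_surj
  revert hmem hsurj
  generalize {A : Fin 3 × Fin 3 → ℝ | _} = V
  intro hmem hsurj
  choose! s hs hs' using hsurj
  let Φ : homogeneousSubmodule (Fin 4) ℝ (2*n) →ₗ[ℝ] (↥V → ℝ) :=
    { toFun := fun p A => eval (s A) p.1
      map_add' := fun p q => by funext A; simp
      map_smul' := fun c p => by funext A; simp [smul_eval] }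
  have hinj : Function.Injective Φ := by
    rw [← LinearMap.ker_eq_bot, LinearMap.ker_eq_bot']
    rintro ⟨p, hp⟩ h0
    apply Subtype.ext
    refine hom_zero n p hp fun q hq => ?_
    obtain ⟨f, -, hf⟩ := hom_ex n p hp
    have h1 : eval (s (phi q)) p = 0 := congrFun h0 ⟨phi q, hmem q hq⟩
    rw [← hf q hq, ← hs' _ (hmem q hq), hf _ (hs _ (hmem q hq)), h1]
  have hrange : LinearMap.range Φ = polySpace V n := by
    apply le_antisymm
    · rintro _ ⟨⟨p, hp⟩, rfl⟩
      obtain ⟨f, hfd, hf⟩ := hom_ex n p hp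
      refine ⟨f, (mem_restrictTotalDegree _ _ _).2 hfd, ?_⟩
      funext A
      have := hf _ (hs _ A.2)
      rw [hs' _ A.2] at this
      exact this
    · rintro _ ⟨f, hfd, rfl⟩
      obtain ⟨p, hp, hpf⟩ := back_ex n f ((mem_restrictTotalDegree _ _ _).1 hfd)
      refine ⟨⟨p, hp⟩, ?_⟩
      funext A
      have := hpf _ (hs _ A.2)
      rw [hs' _ A.2] at this
      exact this
  unfold HF
  rw [← hrange, LinearMap.finrank_range_of_inj hinj, dim_hom, Nat.choose_eq_descFactorial_div_factorial]
  have e1 : (2*n+3).descFactorial 3 = 2 * ((2 * n + 3) * (2 * n + 1) * (n + 1)) := by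
    simp [Nat.descFactorial]
    ring
  have e2 : Nat.factorial 3 = 2 * 3 := rfl
  rw [e1, e2, Nat.mul_div_mul_left _ _ (by norm_num)]
end
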